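/- Let n ≥ 1, δ > 0, and let V : ℝⁿ → ℝ be a smooth potential of symbolic decay order −δ: for every multi-index α there is a constant C_α such that |∂^α V(x)| ≤ C_α (1+|x|)^{−δ−|α|} for all x ∈ ℝⁿ. Let λ > 0 and let ψ : ℝⁿ → ℂ be smooth with ∫_{ℝⁿ} |ψ|² < ∞ and −Δψ + Vψ = λψ on ℝⁿ, where Δ = Σᵢ ∂²/∂xᵢ². Then for every α ∈ ℝ one has ∫_{ℝⁿ} e^{2α|x|} |ψ(x)|² dx < ∞. -/

import Mathlib

open MeasureTheory

/-- Euclidean Laplacian of a complex-valued function on `ℝⁿ`. -/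
noncomputable def lap {n : ℕ} (f : EuclideanSpace ℝ (Fin n) → ℂ)
    (x : EuclideanSpace ℝ (Fin n)) : ℂ :=
  ∑ i : Fin n, fderiv ℝ (fun y => fderiv ℝ f y (EuclideanSpace.single i 1)) x
    (EuclideanSpace.single i 1)

/-!
Let `γ = √λ` and suppose `e^{α⟨x⟩} ψ ∈ L²` for some `α ≥ 0`. Put `φ = e^f ψ` with the weight
`f = α⟨x⟩ + γ⟨x⟩ / (1 + ε⟨x⟩)`, for which `φ ∈ L²`, and write `∇ f = h(x) x`. Pairing the equation
for `φ` with the generator of dilations gives `∫ W φ² = ∫ 2 h (x · ∇ φ)² ≥ 0`, where, uniformly in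
`ε`, the potential `W` is at most `-λ / 2 + o(1)` at infinity: the damping of the weight costs at
most `γ² / 2` of the leading term `-λ`. Hence `∫ φ²` is controlled by the integral of `φ²` over a
fixed compact set, which is bounded uniformly in `ε`, and Fatou's lemma as `ε → 0` yields
`e^{(α + γ)⟨x⟩} ψ ∈ L²`. The gain `γ` does not depend on `α`, so iterating from `α = 0` reaches
every exponent.
-/

open Filter Topology Module InnerProductSpace
open scoped Gradient Laplacian ContDiff RealInnerProductSpace

theorem integrable_of_tendsto_of_integral_le {X : Type*} [MeasurableSpace X] {μ : Measure X}
    {f : X → ℝ} {g : ℕ → X → ℝ} {M : ℝ} (hg : ∀ k, Integrable (g k) μ) (hg0 : ∀ k x, 0 ≤ g k x)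
    (hgM : ∀ k, ∫ x, g k x ∂μ ≤ M) (hlim : ∀ x, Tendsto (fun k => g k x) atTop (𝓝 (f x))) :
    Integrable f μ := by
  have h_lintegral (k : ℕ) : ∫⁻ x, ‖g k x‖ₑ ∂μ ≤ ENNReal.ofReal M := by
    rw [← ofReal_integral_norm_eq_lintegral_enorm (hg k)]
    simpa only [Real.norm_of_nonneg (hg0 k _)] using ENNReal.ofReal_le_ofReal (hgM k)
  refine ⟨aestronglyMeasurable_of_tendsto_ae atTop (fun k => (hg k).aestronglyMeasurable)
    (.of_forall hlim), ?_⟩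
  calc ∫⁻ x, ‖f x‖ₑ ∂μ = ∫⁻ x, liminf (fun k => ‖g k x‖ₑ) atTop ∂μ :=
        lintegral_congr fun x => (hlim x).enorm.liminf_eq.symm
    _ ≤ liminf (fun k => ∫⁻ x, ‖g k x‖ₑ ∂μ) atTop :=
        lintegral_liminf_le' fun k => (hg k).aestronglyMeasurable.enorm
    _ ≤ ENNReal.ofReal M := liminf_le_of_frequently_le' (.of_forall h_lintegral)
    _ < ⊤ := ENNReal.ofReal_lt_top

section EulerOperator

variable {E : Type*} [NormedAddCommGroup E] [NormedSpace ℝ E] {f g : E → ℝ} {x : E}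

/-- The Euler operator `x ↦ ⟪x, ∇ f x⟫`, the generator of dilations. -/
noncomputable def eulerDeriv (f : E → ℝ) (x : E) : ℝ :=
  fderiv ℝ f x x

theorem eulerDeriv_add (hf : DifferentiableAt ℝ f x) (hg : DifferentiableAt ℝ g x) :
    eulerDeriv (fun y => f y + g y) x = eulerDeriv f x + eulerDeriv g x := by
  simp [eulerDeriv, fderiv_fun_add hf hg]

theorem eulerDeriv_sub (hf : DifferentiableAt ℝ f x) (hg : DifferentiableAt ℝ g x) :
    eulerDeriv (fun y => f y - g y) x = eulerDeriv f x - eulerDeriv g x := by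
  simp [eulerDeriv, fderiv_fun_sub hf hg]

theorem eulerDeriv_const_mul (c : ℝ) (hf : DifferentiableAt ℝ f x) :
    eulerDeriv (fun y => c * f y) x = c * eulerDeriv f x := by
  simp [eulerDeriv, fderiv_const_mul hf]

theorem eulerDeriv_mul (hf : DifferentiableAt ℝ f x) (hg : DifferentiableAt ℝ g x) :
    eulerDeriv (fun y => f y * g y) x = eulerDeriv f x * g x + f x * eulerDeriv g x := by
  simp [eulerDeriv, fderiv_fun_mul hf hg]
  ring

theorem contDiff_eulerDeriv {m n : WithTop ℕ∞} (hf : ContDiff ℝ n f) (hmn : m + 1 ≤ n) :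
    ContDiff ℝ m (eulerDeriv f) :=
  (hf.fderiv_right hmn).clm_apply contDiff_id

end EulerOperator

section Divergence

variable {E : Type*} [NormedAddCommGroup E] [NormedSpace ℝ E]
  {f : E → ℝ} {J K : E → E} {x : E}

/-- The divergence of a vector field, as the trace of its derivative (`0` in infinite dimension). -/
noncomputable def divergence (J : E → E) (x : E) : ℝ :=
  LinearMap.trace ℝ E (fderiv ℝ J x)

theorem divergence_add (hJ : DifferentiableAt ℝ J x) (hK : DifferentiableAt ℝ K x) :
    divergence (fun y => J y + K y) x = divergence J x + divergence K x := by
  simp [divergence, fderiv_fun_add hJ hK]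

theorem divergence_sub (hJ : DifferentiableAt ℝ J x) (hK : DifferentiableAt ℝ K x) :
    divergence (fun y => J y - K y) x = divergence J x - divergence K x := by
  simp [divergence, fderiv_fun_sub hJ hK]

variable [FiniteDimensional ℝ E]

theorem divergence_smul (hf : DifferentiableAt ℝ f x) (hJ : DifferentiableAt ℝ J x) :
    divergence (fun y => f y • J y) x = f x * divergence J x + fderiv ℝ f x (J x) := by
  simp [divergence, fderiv_fun_smul hf hJ]

theorem divergence_smul_self (hf : DifferentiableAt ℝ f x) :
    divergence (fun y => f y • y) x = finrank ℝ E * f x + eulerDeriv f x := by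
  have h_id : divergence (fun y : E => y) x = finrank ℝ E := by
    simp [divergence, LinearMap.trace_id]
  rw [divergence_smul hf differentiableAt_fun_id, h_id, mul_comm, eulerDeriv]

theorem continuous_divergence (hJ : ContDiff ℝ 1 J) : Continuous (divergence J) := by
  have h_trace : Continuous fun A : E →L[ℝ] E => LinearMap.trace ℝ E A :=
    (LinearMap.trace ℝ E ∘ₗ ContinuousLinearMap.coeLM ℝ).continuous_of_finiteDimensional
  exact h_trace.comp (hJ.continuous_fderiv one_ne_zero)

end Divergence

section Gradient

variable {E : Type*} [NormedAddCommGroup E] [InnerProductSpace ℝ E] [FiniteDimensional ℝ E]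
  {f g : E → ℝ} {x : E}

theorem gradient_mul (hf : DifferentiableAt ℝ f x) (hg : DifferentiableAt ℝ g x) :
    ∇ (fun y => f y * g y) x = f x • ∇ g x + g x • ∇ f x := by
  simp [gradient, fderiv_fun_mul hf hg]

theorem eulerDeriv_eq_inner_gradient (f : E → ℝ) (x : E) : eulerDeriv f x = ⟪∇ f x, x⟫ :=
  inner_gradient_left.symm

theorem abs_eulerDeriv_le (f : E → ℝ) (x : E) : |eulerDeriv f x| ≤ ‖∇ f x‖ * ‖x‖ := by
  rw [eulerDeriv_eq_inner_gradient]
  exact abs_real_inner_le_norm _ _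

theorem contDiff_gradient {m n : WithTop ℕ∞} (hf : ContDiff ℝ n f) (hmn : m + 1 ≤ n) :
    ContDiff ℝ m (∇ f) :=
  (toDual ℝ E).symm.contDiff.comp (hf.fderiv_right hmn)

theorem inner_fderiv_gradient (hf : ContDiff ℝ 2 f) (x v w : E) :
    ⟪fderiv ℝ (∇ f) x v, w⟫ = fderiv ℝ (fderiv ℝ f) x v w := by
  have h_gradient : DifferentiableAt ℝ (∇ f) x :=
    (contDiff_gradient hf le_rfl).differentiable one_ne_zero x
  have h_fderiv : DifferentiableAt ℝ (fderiv ℝ f) x :=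
    (hf.fderiv_right le_rfl).differentiable one_ne_zero x
  calc ⟪fderiv ℝ (∇ f) x v, w⟫ = fderiv ℝ (fun y => ⟪∇ f y, w⟫) x v := by
        rw [fderiv_inner_apply ℝ h_gradient (differentiableAt_const w)]
        simp
    _ = fderiv ℝ (fun y => fderiv ℝ f y w) x v := by simp only [inner_gradient_left]
    _ = fderiv ℝ (fderiv ℝ f) x v w := by
        simp [fderiv_clm_apply h_fderiv (differentiableAt_const w)]

theorem laplacian_eq_divergence_gradient (hf : ContDiff ℝ 2 f) (x : E) :
    Δ f x = divergence (∇ f) x := by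
  rw [laplacian_eq_iteratedFDeriv_stdOrthonormalBasis, divergence,
    LinearMap.trace_eq_sum_inner _ (stdOrthonormalBasis ℝ E)]
  refine Finset.sum_congr rfl fun i _ => ?_
  rw [iteratedFDeriv_two_apply, real_inner_comm]
  exact (inner_fderiv_gradient hf x _ _).symm

theorem eulerDeriv_norm_gradient_sq (hf : ContDiff ℝ 2 f) (x : E) :
    eulerDeriv (fun y => ‖∇ f y‖ ^ 2) x = 2 * fderiv ℝ (fderiv ℝ f) x x (∇ f x) := by
  have h_diff : DifferentiableAt ℝ (∇ f) x :=
    (contDiff_gradient hf le_rfl).differentiable one_ne_zero x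
  rw [eulerDeriv, h_diff.hasFDerivAt.norm_sq.fderiv]
  simp [← inner_fderiv_gradient hf x x]

theorem fderiv_eulerDeriv_gradient (hf : ContDiff ℝ 2 f) (x : E) :
    fderiv ℝ (eulerDeriv f) x (∇ f x)
      = ‖∇ f x‖ ^ 2 + eulerDeriv (fun y => ‖∇ f y‖ ^ 2) x / 2 := by
  have h_symm : IsSymmSndFDerivAt ℝ f x :=
    hf.contDiffAt.isSymmSndFDerivAt (by simp [minSmoothness_of_isRCLikeNormedField])
  have h_fderiv : DifferentiableAt ℝ (fderiv ℝ f) x :=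
    (hf.fderiv_right le_rfl).differentiable one_ne_zero x
  have h_euler := h_fderiv.hasFDerivAt.clm_apply (hasFDerivAt_id x)
  rw [eulerDeriv_norm_gradient_sq hf, ← h_symm.eq, ← real_inner_self_eq_norm_sq,
    inner_gradient_left]
  refine congr($(h_euler.fderiv) (∇ f x)).trans ?_
  simp

end Gradient

section IntegralDivergence

variable {E F : Type*} [NormedAddCommGroup E] [NormedSpace ℝ E] [FiniteDimensional ℝ E]
  [MeasurableSpace E] [BorelSpace E] {μ : Measure E} [μ.IsAddHaarMeasure]
  [NormedAddCommGroup F] [NormedSpace ℝ F]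

theorem integral_fderiv_apply_eq_zero {f : E → F} (hf : ContDiff ℝ 1 f)
    (hc : HasCompactSupport f) (v : E) : ∫ x, fderiv ℝ f x v ∂μ = 0 := by
  have h_int : Integrable (fun x => fderiv ℝ f x v) μ :=
    ((hf.continuous_fderiv one_ne_zero).clm_apply continuous_const).integrable_of_hasCompactSupport
      (hc.fderiv_apply (𝕜 := ℝ) v)
  simpa using integral_smul_fderiv_eq_neg_fderiv_smul_of_integrable (μ := μ) (𝕜 := ℝ)
    (f := fun _ => 1) (g := f) (v := v) (by simp) (by simpa using h_int)
    (by simpa using hf.continuous.integrable_of_hasCompactSupport hc)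
    (fun _ _ => differentiableAt_const _) (fun x _ => hf.differentiable one_ne_zero x)

theorem integral_divergence_eq_zero {J : E → E} (hJ : ContDiff ℝ 1 J)
    (hc : HasCompactSupport J) : ∫ x, divergence J x ∂μ = 0 := by
  let b := Module.finBasis ℝ E
  have h_div (x : E) : divergence J x = ∑ i, b.coord i (fderiv ℝ J x (b i)) := by
    simp [divergence, LinearMap.trace_eq_matrix_trace ℝ b, Matrix.trace, LinearMap.toMatrix_apply]
  have h_int (i) : Integrable (fun x => fderiv ℝ J x (b i)) μ :=
    ((hJ.continuous_fderiv one_ne_zero).clm_apply continuous_const).integrable_of_hasCompactSupport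
      (hc.fderiv_apply (𝕜 := ℝ) (b i))
  let coord (i) : E →L[ℝ] ℝ := (b.coord i).toContinuousLinearMap
  calc ∫ x, divergence J x ∂μ = ∫ x, ∑ i, coord i (fderiv ℝ J x (b i)) ∂μ :=
        integral_congr_ae (.of_forall h_div)
    _ = ∑ i, coord i (∫ x, fderiv ℝ J x (b i) ∂μ) := by
        rw [integral_finsetSum _ fun i _ => (coord i).integrable_comp (h_int i)]
        exact Finset.sum_congr rfl fun i _ => (coord i).integral_comp_comm (h_int i)
    _ = 0 := by simp [integral_fderiv_apply_eq_zero hJ hc]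

end IntegralDivergence

section Cutoff

variable {E : Type*} [NormedAddCommGroup E] [InnerProductSpace ℝ E]

/-- A smooth bump equal to `1` on the ball of radius `k + 1` and to `0` outside the ball of radius
`2 * (k + 1)`; all members of the sequence are dilates of one function. -/
noncomputable def dilatedCutoff (k : ℕ) (x : E) : ℝ :=
  (⟨1, 2, one_pos, one_lt_two⟩ : ContDiffBump (0 : E)) ((k + 1 : ℝ)⁻¹ • x)

theorem dilatedCutoff_nonneg (k : ℕ) (x : E) : 0 ≤ dilatedCutoff k x :=
  ContDiffBump.nonneg _

theorem dilatedCutoff_le_one (k : ℕ) (x : E) : dilatedCutoff k x ≤ 1 :=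
  ContDiffBump.le_one _

theorem contDiff_dilatedCutoff (k : ℕ) {n : ℕ∞} : ContDiff ℝ n (dilatedCutoff (E := E) k) :=
  (ContDiffBump.contDiff _).comp (contDiff_const_smul _)

theorem fderiv_dilatedCutoff (k : ℕ) (x : E) :
    fderiv ℝ (dilatedCutoff k) x
      = (k + 1 : ℝ)⁻¹ • fderiv ℝ (⟨1, 2, one_pos, one_lt_two⟩ : ContDiffBump (0 : E))
          ((k + 1 : ℝ)⁻¹ • x) :=
  fderiv_comp_smul _

theorem tendsto_inv_add_one_smul (x : E) :
    Tendsto (fun k : ℕ => (k + 1 : ℝ)⁻¹ • x) atTop (𝓝 0) := by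
  simpa using tendsto_one_div_add_atTop_nhds_zero_nat (𝕜 := ℝ) |>.smul_const x

theorem tendsto_dilatedCutoff (x : E) : Tendsto (dilatedCutoff · x) atTop (𝓝 1) := by
  let bump : ContDiffBump (0 : E) := ⟨1, 2, one_pos, one_lt_two⟩
  have h_one : bump 0 = 1 := bump.one_of_mem_closedBall (by simp [bump])
  rw [← h_one]
  exact (bump.continuous.tendsto 0).comp (tendsto_inv_add_one_smul x)

theorem tendsto_fderiv_dilatedCutoff (x : E) :
    Tendsto (fun k => fderiv ℝ (dilatedCutoff k) x) atTop (𝓝 0) := by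
  let bump : ContDiffBump (0 : E) := ⟨1, 2, one_pos, one_lt_two⟩
  have h_fderiv : Continuous (fderiv ℝ bump) :=
    (bump.contDiff (n := 1)).continuous_fderiv one_ne_zero
  simp only [fderiv_dilatedCutoff]
  simpa using (tendsto_one_div_add_atTop_nhds_zero_nat (𝕜 := ℝ)).smul
    ((h_fderiv.tendsto 0).comp (tendsto_inv_add_one_smul x))

variable [FiniteDimensional ℝ E]

theorem hasCompactSupport_dilatedCutoff (k : ℕ) : HasCompactSupport (dilatedCutoff (E := E) k) :=
  (ContDiffBump.hasCompactSupport _).comp_smul (by positivity)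

theorem exists_one_add_norm_mul_norm_fderiv_dilatedCutoff_le :
    ∃ L : ℝ, ∀ (k : ℕ) (x : E), (1 + ‖x‖) * ‖fderiv ℝ (dilatedCutoff k) x‖ ≤ L := by
  let bump : ContDiffBump (0 : E) := ⟨1, 2, one_pos, one_lt_two⟩
  have h_cont : Continuous fun y : E => (1 + ‖y‖) * ‖fderiv ℝ bump y‖ :=
    (continuous_const.add continuous_norm).mul
      ((bump.contDiff (n := 1)).continuous_fderiv one_ne_zero).norm
  obtain ⟨L, hL⟩ := h_cont.bounded_above_of_compact_support
    ((bump.hasCompactSupport.fderiv (𝕜 := ℝ)).norm.mul_left)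
  refine ⟨L, fun k x => ?_⟩
  set ε : ℝ := (k + 1 : ℝ)⁻¹
  have hε0 : 0 ≤ ε := by positivity
  have hε1 : ε ≤ 1 := inv_le_one_of_one_le₀ (by simp)
  have h_fderiv : fderiv ℝ (dilatedCutoff k) x = ε • fderiv ℝ bump (ε • x) :=
    fderiv_dilatedCutoff k x
  calc (1 + ‖x‖) * ‖fderiv ℝ (dilatedCutoff k) x‖
      = (ε + ε * ‖x‖) * ‖fderiv ℝ bump (ε • x)‖ := by
        rw [h_fderiv, norm_smul, Real.norm_of_nonneg hε0]
        ring
    _ ≤ (1 + ‖ε • x‖) * ‖fderiv ℝ bump (ε • x)‖ := by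
        rw [norm_smul, Real.norm_of_nonneg hε0]
        gcongr
    _ ≤ L := (le_abs_self _).trans (hL _)

theorem exists_norm_fderiv_dilatedCutoff_le :
    ∃ L : ℝ, ∀ (k : ℕ) (x : E), ‖fderiv ℝ (dilatedCutoff k) x‖ ≤ L := by
  obtain ⟨L, hL⟩ := exists_one_add_norm_mul_norm_fderiv_dilatedCutoff_le (E := E)
  exact ⟨L, fun k x => (le_mul_of_one_le_left (norm_nonneg _)
    (le_add_of_nonneg_right (norm_nonneg x))).trans (hL k x)⟩

end Cutoff

section DivergenceAtInfinity

variable {E : Type*} [NormedAddCommGroup E] [InnerProductSpace ℝ E]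

theorem norm_mul_add_fderiv_le {χ g G : E → ℝ} {J : E → E} {L : ℝ} {x : E} (hχ0 : 0 ≤ χ x)
    (hχ1 : χ x ≤ 1) (hL : (1 + ‖x‖) * ‖fderiv ℝ χ x‖ ≤ L) (hJG : ‖J x‖ ≤ (1 + ‖x‖) * G x) :
    ‖χ x * g x + fderiv ℝ χ x (J x)‖ ≤ ‖g x‖ + L * G x := by
  have hG0 : 0 ≤ G x := nonneg_of_mul_nonneg_right ((norm_nonneg _).trans hJG) (by positivity)
  have h_fderiv : ‖fderiv ℝ χ x (J x)‖ ≤ L * G x :=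
    calc ‖fderiv ℝ χ x (J x)‖ ≤ ‖fderiv ℝ χ x‖ * ((1 + ‖x‖) * G x) :=
          ContinuousLinearMap.le_opNorm_of_le _ hJG
      _ = (1 + ‖x‖) * ‖fderiv ℝ χ x‖ * G x := by ring
      _ ≤ L * G x := mul_le_mul_of_nonneg_right hL hG0
  have h_mul : ‖χ x * g x‖ ≤ ‖g x‖ := by
    rw [norm_mul, Real.norm_of_nonneg hχ0]
    exact mul_le_of_le_one_left (norm_nonneg _) hχ1
  exact (norm_add_le _ _).trans (add_le_add h_mul h_fderiv)

variable [FiniteDimensional ℝ E]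
  [MeasurableSpace E] [BorelSpace E] {μ : Measure E} [μ.IsAddHaarMeasure]

theorem integral_nonpos_of_le_divergence_of_hasCompactSupport {J : E → E} {g : E → ℝ}
    (hJ : ContDiff ℝ 1 J) (hc : HasCompactSupport J) (hg : Integrable g μ)
    (hgJ : ∀ x, g x ≤ divergence J x) : ∫ x, g x ∂μ ≤ 0 := by
  have h_support : HasCompactSupport (divergence J) :=
    (hc.fderiv (𝕜 := ℝ)).comp_left (g := fun A : E →L[ℝ] E => LinearMap.trace ℝ E A) (by simp)
  rw [← integral_divergence_eq_zero (μ := μ) hJ hc]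
  exact integral_mono hg
    ((continuous_divergence hJ).integrable_of_hasCompactSupport h_support) hgJ

theorem integral_nonpos_of_le_divergence {J : E → E} {G g : E → ℝ} (hJ : ContDiff ℝ 1 J)
    (hG : Integrable G μ) (hJG : ∀ x, ‖J x‖ ≤ (1 + ‖x‖) * G x)
    (hg : Integrable g μ) (hgJ : ∀ x, g x ≤ divergence J x) : ∫ x, g x ∂μ ≤ 0 := by
  obtain ⟨L, hL⟩ := exists_one_add_norm_mul_norm_fderiv_dilatedCutoff_le (E := E)
  let F (k : ℕ) (x : E) : ℝ := dilatedCutoff k x * g x + fderiv ℝ (dilatedCutoff k) x (J x)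
  have hχ (k : ℕ) : ContDiff ℝ 1 (dilatedCutoff (E := E) k) := contDiff_dilatedCutoff k
  have h_bound (k : ℕ) (x : E) : ‖F k x‖ ≤ ‖g x‖ + L * G x :=
    norm_mul_add_fderiv_le (dilatedCutoff_nonneg k x) (dilatedCutoff_le_one k x) (hL k x) (hJG x)
  have h_dom : Integrable (fun x => ‖g x‖ + L * G x) μ := hg.norm.add (hG.const_mul L)
  have h_meas (k : ℕ) : AEStronglyMeasurable (F k) μ :=
    ((hχ k).continuous.aestronglyMeasurable.mul hg.aestronglyMeasurable).add
      (((hχ k).continuous_fderiv one_ne_zero).clm_apply hJ.continuous).aestronglyMeasurable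
  have h_lim (x : E) : Tendsto (F · x) atTop (𝓝 (g x)) := by
    simpa using ((tendsto_dilatedCutoff x).mul_const (g x)).add
      (((ContinuousLinearMap.apply ℝ ℝ (J x)).continuous.tendsto 0).comp
        (tendsto_fderiv_dilatedCutoff x))
  have h_nonpos (k : ℕ) : ∫ x, F k x ∂μ ≤ 0 := by
    refine integral_nonpos_of_le_divergence_of_hasCompactSupport
      (J := fun x => dilatedCutoff k x • J x) ((hχ k).smul hJ)
      (hasCompactSupport_dilatedCutoff k).smul_right
      (h_dom.mono' (h_meas k) (.of_forall (h_bound k))) fun x => ?_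
    rw [divergence_smul ((hχ k).differentiable one_ne_zero x) (hJ.differentiable one_ne_zero x)]
    exact add_le_add_left
      (mul_le_mul_of_nonneg_left (hgJ x) (dilatedCutoff_nonneg k x)) _
  exact le_of_tendsto' (tendsto_integral_of_dominated_convergence _ h_meas h_dom
    (fun k => .of_forall (h_bound k)) (.of_forall h_lim)) h_nonpos

end DivergenceAtInfinity

section Caccioppoli

variable {E : Type*} [NormedAddCommGroup E] [InnerProductSpace ℝ E] [FiniteDimensional ℝ E]
  {φ χ : E → ℝ} {C L : ℝ}

theorem sub_le_divergence_sq_mul_smul_gradient {x : E} (hφ : ContDiff ℝ 2 φ)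
    (hΔ : -(φ x * Δ φ x) ≤ ‖∇ φ x‖ ^ 2 / 2 + C * φ x ^ 2) (hχ : DifferentiableAt ℝ χ x)
    (hχ0 : 0 ≤ χ x) (hχ1 : χ x ≤ 1) (hL : ‖fderiv ℝ χ x‖ ≤ L) :
    (χ x * ‖∇ φ x‖) ^ 2 / 4 - (|C| + 4 * L ^ 2) * φ x ^ 2
      ≤ divergence (fun y => (χ y ^ 2 * φ y) • ∇ φ y) x := by
  have hφ_diff : DifferentiableAt ℝ φ x := hφ.differentiable two_ne_zero x
  have h_div : divergence (fun y => (χ y ^ 2 * φ y) • ∇ φ y) x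
      = χ x ^ 2 * (φ x * Δ φ x) + χ x ^ 2 * ‖∇ φ x‖ ^ 2
        + 2 * χ x * φ x * fderiv ℝ χ x (∇ φ x) := by
    rw [divergence_smul ((hχ.fun_pow 2).fun_mul hφ_diff)
      ((contDiff_gradient hφ le_rfl).differentiable one_ne_zero x),
      laplacian_eq_divergence_gradient hφ, ← real_inner_self_eq_norm_sq, inner_gradient_left]
    simp [fderiv_fun_mul (hχ.fun_pow 2) hφ_diff, fderiv_fun_pow 2 hχ]
    ring
  have h_cross : |fderiv ℝ χ x (∇ φ x)| ≤ L * ‖∇ φ x‖ :=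
    ContinuousLinearMap.le_of_opNorm_le _ hL _
  have h_young : -((χ x * ‖∇ φ x‖) ^ 2 / 4 + 4 * L ^ 2 * φ x ^ 2)
      ≤ 2 * χ x * φ x * fderiv ℝ χ x (∇ φ x) := by
    refine neg_le_of_abs_le ?_
    calc |2 * χ x * φ x * fderiv ℝ χ x (∇ φ x)|
        = 2 * χ x * |φ x| * |fderiv ℝ χ x (∇ φ x)| := by
          rw [abs_mul, abs_mul, abs_of_nonneg (by positivity)]
      _ ≤ 2 * χ x * |φ x| * (L * ‖∇ φ x‖) := by gcongr
      _ ≤ (χ x * ‖∇ φ x‖) ^ 2 / 4 + 4 * L ^ 2 * φ x ^ 2 := by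
          rw [← sq_abs (φ x)]
          linarith [sq_nonneg (χ x * ‖∇ φ x‖ / 2 - 2 * L * |φ x|)]
  have h_elliptic := mul_le_mul_of_nonneg_left hΔ (sq_nonneg (χ x))
  have h_mass : χ x ^ 2 * (C * φ x ^ 2) ≤ |C| * φ x ^ 2 :=
    calc χ x ^ 2 * (C * φ x ^ 2) ≤ χ x ^ 2 * (|C| * φ x ^ 2) := by gcongr; exact le_abs_self C
      _ ≤ |C| * φ x ^ 2 := mul_le_of_le_one_left (by positivity) (pow_le_one₀ hχ0 hχ1)
  rw [h_div]
  linarith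

variable [MeasurableSpace E] [BorelSpace E] {μ : Measure E} [μ.IsAddHaarMeasure]

theorem integrable_mul_norm_gradient_sq (hφ : ContDiff ℝ 2 φ) (hχ : ContDiff ℝ 1 χ)
    (hχc : HasCompactSupport χ) : Integrable (fun x => (χ x * ‖∇ φ x‖) ^ 2) μ := by
  have h_grad : Continuous (∇ φ) := (contDiff_gradient (m := 1) hφ le_rfl).continuous
  exact ((hχ.continuous.mul h_grad.norm).pow 2).integrable_of_hasCompactSupport
    (hχc.mono fun x hx hχx => hx (by simp [hχx]))

theorem integral_mul_norm_gradient_sq_le (hφ : ContDiff ℝ 2 φ)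
    (hφ2 : Integrable (fun x => φ x ^ 2) μ)
    (hΔ : ∀ x, -(φ x * Δ φ x) ≤ ‖∇ φ x‖ ^ 2 / 2 + C * φ x ^ 2) (hχ : ContDiff ℝ 1 χ)
    (hχc : HasCompactSupport χ) (hχ0 : ∀ x, 0 ≤ χ x) (hχ1 : ∀ x, χ x ≤ 1)
    (hL : ∀ x, ‖fderiv ℝ χ x‖ ≤ L) :
    ∫ x, (χ x * ‖∇ φ x‖) ^ 2 ∂μ ≤ 4 * ((|C| + 4 * L ^ 2) * ∫ x, φ x ^ 2 ∂μ) := by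
  have h_energy := (integrable_mul_norm_gradient_sq (μ := μ) hφ hχ hχc).div_const 4
  have h_mass := hφ2.const_mul (|C| + 4 * L ^ 2)
  have h_support : HasCompactSupport fun y => (χ y ^ 2 * φ y) • ∇ φ y :=
    hχc.mono fun x hx hχx => hx (by simp [hχx])
  have h_nonpos := integral_nonpos_of_le_divergence_of_hasCompactSupport
    (((hχ.pow 2).mul (hφ.of_le one_le_two)).smul (contDiff_gradient hφ le_rfl)) h_support
    (h_energy.sub h_mass) fun x => sub_le_divergence_sq_mul_smul_gradient hφ (hΔ x)
      (hχ.differentiable one_ne_zero x) (hχ0 x) (hχ1 x) (hL x)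
  simp only [Pi.sub_apply] at h_nonpos
  rw [integral_sub h_energy h_mass, integral_div, integral_const_mul] at h_nonpos
  linarith

theorem integrable_norm_gradient_sq (hφ : ContDiff ℝ 2 φ)
    (hφ2 : Integrable (fun x => φ x ^ 2) μ)
    (hΔ : ∀ x, -(φ x * Δ φ x) ≤ ‖∇ φ x‖ ^ 2 / 2 + C * φ x ^ 2) :
    Integrable (fun x => ‖∇ φ x‖ ^ 2) μ := by
  obtain ⟨L, hL⟩ := exists_norm_fderiv_dilatedCutoff_le (E := E)
  refine integrable_of_tendsto_of_integral_le (g := fun k x => (dilatedCutoff k x * ‖∇ φ x‖) ^ 2)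
    (fun k => integrable_mul_norm_gradient_sq hφ (contDiff_dilatedCutoff k)
      (hasCompactSupport_dilatedCutoff k))
    (fun k x => sq_nonneg _)
    (fun k => integral_mul_norm_gradient_sq_le hφ hφ2 hΔ (contDiff_dilatedCutoff k)
      (hasCompactSupport_dilatedCutoff k) (dilatedCutoff_nonneg k) (dilatedCutoff_le_one k) (hL k))
    fun x => ?_
  simpa using ((tendsto_dilatedCutoff x).mul_const ‖∇ φ x‖).pow 2

theorem integrable_norm_gradient_sq_of_laplacian_eq {φ a h : E → ℝ} {A B : ℝ}
    (hφ : ContDiff ℝ 2 φ) (hφ2 : Integrable (fun x => φ x ^ 2) μ)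
    (hΔ : ∀ x, Δ φ x = 2 * h x * eulerDeriv φ x + a x * φ x)
    (hA : ∀ x, |h x| * ‖x‖ ≤ A) (hB : ∀ x, |a x| ≤ B) :
    Integrable (fun x => ‖∇ φ x‖ ^ 2) μ := by
  refine integrable_norm_gradient_sq (C := 2 * A ^ 2 + B) hφ hφ2 fun x => ?_
  have h_drift : |φ x * (2 * h x * eulerDeriv φ x)| ≤ 2 * A * ‖∇ φ x‖ * |φ x| :=
    calc |φ x * (2 * h x * eulerDeriv φ x)| = |h x| * |eulerDeriv φ x| * (2 * |φ x|) := by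
          simp only [abs_mul, abs_two]
          ring
      _ ≤ |h x| * (‖∇ φ x‖ * ‖x‖) * (2 * |φ x|) := by
          gcongr
          exact abs_eulerDeriv_le φ x
      _ = |h x| * ‖x‖ * (2 * ‖∇ φ x‖ * |φ x|) := by ring
      _ ≤ A * (2 * ‖∇ φ x‖ * |φ x|) := by
          gcongr
          exact hA x
      _ = 2 * A * ‖∇ φ x‖ * |φ x| := by ring
  have h_mass : -(a x * φ x ^ 2) ≤ B * φ x ^ 2 := by
    rw [← neg_mul]
    exact mul_le_mul_of_nonneg_right ((neg_le_abs _).trans (hB x)) (sq_nonneg _)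
  calc -(φ x * Δ φ x) = -(φ x * (2 * h x * eulerDeriv φ x)) + -(a x * φ x ^ 2) := by
        rw [hΔ]
        ring
    _ ≤ 2 * A * ‖∇ φ x‖ * |φ x| + B * φ x ^ 2 := add_le_add ((neg_le_abs _).trans h_drift) h_mass
    _ ≤ ‖∇ φ x‖ ^ 2 / 2 + (2 * A ^ 2 + B) * φ x ^ 2 := by
        rw [← sq_abs (φ x)]
        linarith [sq_nonneg (‖∇ φ x‖ - 2 * A * |φ x|)]

end Caccioppoli

section Pohozaev

variable {E : Type*} [NormedAddCommGroup E] [InnerProductSpace ℝ E] [FiniteDimensional ℝ E]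
  {φ h Z : E → ℝ}

/-- The Pohozaev (virial) field: the dilation multiplier applied to `∇ φ`, corrected by the radial
flux of the energy density with potential `Z`. The constant `n / 2 - 1` is the one for which
`‖∇ φ‖ ^ 2` cancels in the divergence. -/
noncomputable def pohozaevField (φ Z : E → ℝ) (x : E) : E :=
  (eulerDeriv φ x + (finrank ℝ E / 2 - 1) * φ x) • ∇ φ x
    - ((‖∇ φ x‖ ^ 2 + Z x * φ x ^ 2) / 2) • x

theorem contDiff_pohozaevField (hφ : ContDiff ℝ 2 φ) (hZ : ContDiff ℝ 1 Z) :
    ContDiff ℝ 1 (pohozaevField φ Z) := by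
  have hφ1 : ContDiff ℝ 1 φ := hφ.of_le one_le_two
  have h_grad : ContDiff ℝ 1 (∇ φ) := contDiff_gradient hφ le_rfl
  exact (((contDiff_eulerDeriv hφ le_rfl).add (contDiff_const.mul hφ1)).smul h_grad).sub
    ((((h_grad.norm_sq ℝ).add (hZ.mul (hφ1.pow 2))).div_const 2).smul contDiff_id)

theorem divergence_pohozaevField (hφ : ContDiff ℝ 2 φ) (hZ : ContDiff ℝ 1 Z) (x : E) :
    divergence (pohozaevField φ Z) x
      = (eulerDeriv φ x + (finrank ℝ E / 2 - 1) * φ x) * Δ φ x - Z x * φ x * eulerDeriv φ x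
        - (finrank ℝ E * Z x + eulerDeriv Z x) / 2 * φ x ^ 2 := by
  have h_grad : DifferentiableAt ℝ (∇ φ) x :=
    (contDiff_gradient hφ le_rfl).differentiable one_ne_zero x
  have hφ' : DifferentiableAt ℝ φ x := hφ.differentiable two_ne_zero x
  have hZ' : DifferentiableAt ℝ Z x := hZ.differentiable one_ne_zero x
  have h_euler : DifferentiableAt ℝ (eulerDeriv φ) x :=
    (contDiff_eulerDeriv hφ le_rfl).differentiable one_ne_zero x
  have h_mult : DifferentiableAt ℝ
      (fun y => eulerDeriv φ y + (finrank ℝ E / 2 - 1) * φ y) x := by fun_prop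
  have h_norm : DifferentiableAt ℝ (fun y => ‖∇ φ y‖ ^ 2) x := h_grad.norm_sq ℝ
  have h_energy : DifferentiableAt ℝ (fun y => (‖∇ φ y‖ ^ 2 + Z y * φ y ^ 2) / 2) x := by fun_prop
  have h_fderiv_mult : fderiv ℝ (fun y => eulerDeriv φ y + (finrank ℝ E / 2 - 1) * φ y) x (∇ φ x)
      = eulerDeriv (fun y => ‖∇ φ y‖ ^ 2) x / 2 + finrank ℝ E / 2 * ‖∇ φ x‖ ^ 2 := by
    rw [fderiv_fun_add h_euler (by fun_prop), fderiv_const_mul hφ']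
    simp [fderiv_eulerDeriv_gradient hφ, ← inner_gradient_left]
    ring
  have h_euler_energy : eulerDeriv (fun y => (‖∇ φ y‖ ^ 2 + Z y * φ y ^ 2) / 2) x
      = (eulerDeriv (fun y => ‖∇ φ y‖ ^ 2) x + eulerDeriv Z x * φ x ^ 2) / 2
        + Z x * φ x * eulerDeriv φ x := by
    simp_rw [div_eq_mul_inv, pow_two (φ _)]
    rw [eulerDeriv_mul (by fun_prop) (by fun_prop), eulerDeriv_add h_norm (by fun_prop),
      eulerDeriv_mul hZ' (by fun_prop), eulerDeriv_mul hφ' hφ']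
    simp [eulerDeriv]
    ring
  unfold pohozaevField
  rw [divergence_sub (h_mult.fun_smul h_grad) (h_energy.fun_smul differentiableAt_fun_id),
    divergence_smul h_mult h_grad, divergence_smul_self h_energy,
    ← laplacian_eq_divergence_gradient hφ, h_fderiv_mult, h_euler_energy]
  ring

theorem norm_pohozaevField_le {B : ℝ} {x : E} (hZ : |Z x| ≤ B) :
    ‖pohozaevField φ Z x‖
      ≤ (1 + ‖x‖) * ((2 + |(finrank ℝ E : ℝ) / 2 - 1|) * ‖∇ φ x‖ ^ 2
          + (B + |(finrank ℝ E : ℝ) / 2 - 1|) * φ x ^ 2) := by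
  set c : ℝ := finrank ℝ E / 2 - 1
  have h_mult : |eulerDeriv φ x + c * φ x| ≤ ‖∇ φ x‖ * ‖x‖ + |c| * |φ x| :=
    (abs_add_le _ _).trans (add_le_add (abs_eulerDeriv_le φ x) (abs_mul c _).le)
  have h_energy : |(‖∇ φ x‖ ^ 2 + Z x * φ x ^ 2) / 2| ≤ (‖∇ φ x‖ ^ 2 + B * φ x ^ 2) / 2 := by
    rw [abs_div, abs_two]
    gcongr
    refine (abs_add_le _ _).trans ?_
    rw [abs_mul, abs_of_nonneg (sq_nonneg (φ x)), abs_of_nonneg (sq_nonneg ‖∇ φ x‖)]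
    gcongr
  have hB : 0 ≤ B := (abs_nonneg _).trans hZ
  calc ‖pohozaevField φ Z x‖
      ≤ (‖∇ φ x‖ * ‖x‖ + |c| * |φ x|) * ‖∇ φ x‖ + (‖∇ φ x‖ ^ 2 + B * φ x ^ 2) / 2 * ‖x‖ := by
        refine (norm_sub_le _ _).trans ?_
        rw [norm_smul, norm_smul, Real.norm_eq_abs, Real.norm_eq_abs]
        gcongr
    _ ≤ _ := by
        have h_cross := mul_nonneg (abs_nonneg c) (sq_nonneg (|φ x| - ‖∇ φ x‖))
        rw [← sq_abs (φ x)]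
        have h_rest : 0 ≤ |c| * (‖∇ φ x‖ ^ 2 + |φ x| ^ 2) * (1 / 2 + ‖x‖)
          + ‖∇ φ x‖ ^ 2 * (2 + ‖x‖ / 2) + B * |φ x| ^ 2 * (1 + ‖x‖ / 2) := by positivity
        linarith

variable [MeasurableSpace E] [BorelSpace E] {μ : Measure E} [μ.IsAddHaarMeasure]

theorem integral_virial_mul_sq_nonneg {B : ℝ} (hφ : ContDiff ℝ 2 φ) (hZ : ContDiff ℝ 1 Z)
    (hΔ : ∀ x, Δ φ x = 2 * h x * eulerDeriv φ x + (Z x - (finrank ℝ E - 2) * h x) * φ x)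
    (hh : ∀ x, 0 ≤ h x) (hZB : ∀ x, |Z x| ≤ B)
    (hφ2 : Integrable (fun x => φ x ^ 2) μ) (hgrad : Integrable (fun x => ‖∇ φ x‖ ^ 2) μ)
    (hint : Integrable
      (fun x => (Z x + eulerDeriv Z x / 2 + (finrank ℝ E - 2) ^ 2 / 2 * h x) * φ x ^ 2) μ) :
    0 ≤ ∫ x, (Z x + eulerDeriv Z x / 2 + (finrank ℝ E - 2) ^ 2 / 2 * h x) * φ x ^ 2 ∂μ := by
  have h_nonpos := integral_nonpos_of_le_divergence (contDiff_pohozaevField hφ hZ)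
    ((hgrad.const_mul _).add (hφ2.const_mul _)) (fun x => norm_pohozaevField_le (hZB x)) hint.neg
    fun x => by
      have h_square : 0 ≤ 2 * h x * eulerDeriv φ x ^ 2 :=
        mul_nonneg (mul_nonneg zero_le_two (hh x)) (sq_nonneg _)
      rw [divergence_pohozaevField hφ hZ, hΔ, Pi.neg_apply]
      linarith
  simpa [integral_neg] using h_nonpos

end Pohozaev

section Conjugation

variable {E : Type*} [NormedAddCommGroup E] [InnerProductSpace ℝ E] [FiniteDimensional ℝ E]
  {f h u : E → ℝ} {x : E}

theorem gradient_exp_mul (hf : DifferentiableAt ℝ f x) (hu : DifferentiableAt ℝ u x) :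
    ∇ (fun y => Real.exp (f y) * u y) x
      = Real.exp (f x) • ∇ u x + (Real.exp (f x) * u x) • ∇ f x := by
  rw [gradient_mul hf.exp hu]
  simp [gradient, fderiv_exp hf, smul_smul, mul_comm]

theorem eulerDeriv_exp_mul (hf : DifferentiableAt ℝ f x) (hu : DifferentiableAt ℝ u x)
    (hgrad : ∇ f x = h x • x) :
    eulerDeriv (fun y => Real.exp (f y) * u y) x
      = Real.exp (f x) * eulerDeriv u x + h x * ‖x‖ ^ 2 * (Real.exp (f x) * u x) := by
  simp only [eulerDeriv_eq_inner_gradient, gradient_exp_mul hf hu, hgrad, inner_add_left,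
    real_inner_smul_left, real_inner_self_eq_norm_sq]
  ring

theorem laplacian_exp_mul (hf : ContDiff ℝ 2 f) (hh : DifferentiableAt ℝ h x)
    (hgrad : ∀ y, ∇ f y = h y • y) (hu : ContDiff ℝ 2 u) :
    Δ (fun y => Real.exp (f y) * u y) x
      = Real.exp (f x) * Δ u x + 2 * h x * eulerDeriv (fun y => Real.exp (f y) * u y) x
        + (finrank ℝ E * h x + eulerDeriv h x - h x ^ 2 * ‖x‖ ^ 2) * (Real.exp (f x) * u x) := by
  have hf' := hf.differentiable two_ne_zero
  have hu' := hu.differentiable two_ne_zero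
  have h_grad : DifferentiableAt ℝ (∇ u) x :=
    (contDiff_gradient hu le_rfl).differentiable one_ne_zero x
  have h_eq : ∇ (fun y => Real.exp (f y) * u y)
      = fun y => Real.exp (f y) • ∇ u y + (h y * (Real.exp (f y) * u y)) • y := by
    ext1 y
    rw [gradient_exp_mul (hf' y) (hu' y), hgrad, smul_smul, mul_comm (h y)]
  have hφ : DifferentiableAt ℝ (fun y => Real.exp (f y) * u y) x := (hf' x).exp.fun_mul (hu' x)
  have h_fderiv_exp : fderiv ℝ (fun y => Real.exp (f y)) x (∇ u x)
      = Real.exp (f x) * (h x * eulerDeriv u x) := by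
    rw [fderiv_exp (hf' x), eulerDeriv_eq_inner_gradient, ← real_inner_smul_right, ← hgrad,
      real_inner_comm, inner_gradient_left]
    rfl
  rw [laplacian_eq_divergence_gradient (hf.exp.mul hu), h_eq,
    divergence_add ((hf' x).exp.fun_smul h_grad) ((hh.fun_mul hφ).fun_smul differentiableAt_fun_id),
    divergence_smul (hf' x).exp h_grad, divergence_smul_self (hh.fun_mul hφ),
    ← laplacian_eq_divergence_gradient hu, h_fderiv_exp, eulerDeriv_mul hh hφ,
    eulerDeriv_exp_mul (hf' x) (hu' x) (hgrad x)]
  ring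

end Conjugation

theorem abs_le_of_abs_add_half_eulerDeriv_le {E : Type*} [NormedAddCommGroup E] [NormedSpace ℝ E]
    {q : E → ℝ} {M : ℝ} (hq : Differentiable ℝ q) (hM : ∀ x, |q x + eulerDeriv q x / 2| ≤ M)
    (x : E) : |q x| ≤ M := by
  have h_deriv (t : ℝ) : HasDerivAt (fun t : ℝ => t ^ 2 * q (t • x))
      (2 * t * (q (t • x) + eulerDeriv q (t • x) / 2)) t := by
    have h_dilate : HasDerivAt (fun t : ℝ => t • x) x t := by
      simpa using (hasDerivAt_id t).smul_const x
    refine ((hasDerivAt_pow 2 t).mul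
      ((hq (t • x)).hasFDerivAt.comp_hasDerivAt t h_dilate)).congr_deriv ?_
    simp [eulerDeriv]
    ring
  have h_bound := image_norm_le_of_norm_deriv_right_le_deriv_boundary (a := 0) (b := 1)
    (B := fun t => M * t ^ 2) (B' := fun t => M * (2 * t))
    (fun t _ => (h_deriv t).continuousAt.continuousWithinAt)
    (fun t _ => (h_deriv t).hasDerivWithinAt)
    (by simp) (fun t => by simpa using (hasDerivAt_pow 2 t).const_mul M)
    (fun t ht => by
      rw [norm_mul, Real.norm_of_nonneg (by linarith [ht.1]), mul_comm M]
      exact mul_le_mul_of_nonneg_left (hM _) (by linarith [ht.1]))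
  simpa using h_bound (Set.right_mem_Icc.mpr zero_le_one)

section WeightedVirial

variable {E : Type*} [NormedAddCommGroup E]

/-- The Japanese bracket `⟨x⟩`, a smooth substitute for `‖x‖`. -/
noncomputable def japaneseBracket (x : E) : ℝ :=
  √(1 + ‖x‖ ^ 2)

theorem japaneseBracket_sq (x : E) : japaneseBracket x ^ 2 = 1 + ‖x‖ ^ 2 :=
  Real.sq_sqrt (by positivity)

theorem one_le_japaneseBracket (x : E) : 1 ≤ japaneseBracket x :=
  Real.one_le_sqrt.mpr (le_add_of_nonneg_right (by positivity))

theorem japaneseBracket_pos (x : E) : 0 < japaneseBracket x :=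
  one_pos.trans_le (one_le_japaneseBracket x)

theorem norm_le_japaneseBracket (x : E) : ‖x‖ ≤ japaneseBracket x :=
  Real.le_sqrt_of_sq_le (by linarith)

variable [InnerProductSpace ℝ E]

/-- `f` is a radial weight with gradient `h x • x` and `0 ≤ h`, with symbol bounds of order
`-1` and constant `A` on `h` and its first two Euler derivatives. -/
structure IsRadialWeight [FiniteDimensional ℝ E] (f h : E → ℝ) (A : ℝ) : Prop where
  contDiff_weight : ContDiff ℝ 2 f
  contDiff_slope : ContDiff ℝ 2 h
  gradient_eq : ∀ x, ∇ f x = h x • x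
  slope_nonneg : ∀ x, 0 ≤ h x
  slope_le : ∀ x, h x ≤ A / japaneseBracket x
  abs_eulerDeriv_slope_le : ∀ x, |eulerDeriv h x| ≤ A / japaneseBracket x
  abs_eulerDeriv_eulerDeriv_slope_le : ∀ x, |eulerDeriv (eulerDeriv h) x| ≤ A / japaneseBracket x

/-- If `Δ u = q * u` and `∇ f x = h x • x`, then `φ = exp f * u` satisfies
`Δ φ = 2 * h * eulerDeriv φ + (Z - (n - 2) * h) * φ` with `Z` this potential. -/
noncomputable def conjugatedPotential (h q : E → ℝ) (x : E) : ℝ :=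
  (2 * finrank ℝ E - 2) * h x + eulerDeriv h x - h x ^ 2 * ‖x‖ ^ 2 + q x

/-- The potential in the virial inequality for `exp f * u`, where `Δ u = q * u` and
`∇ f x = h x • x`. -/
noncomputable def virialPotential (h q : E → ℝ) (x : E) : ℝ :=
  q x + eulerDeriv q x / 2 - h x * ‖x‖ ^ 2 * (2 * h x + eulerDeriv h x)
    + (finrank ℝ E ^ 2 / 2 * h x + finrank ℝ E * eulerDeriv h x + eulerDeriv (eulerDeriv h) x / 2)

variable {f h q u : E → ℝ} {A M : ℝ}

theorem eulerDeriv_norm_sq (x : E) : eulerDeriv (fun y : E => ‖y‖ ^ 2) x = 2 * ‖x‖ ^ 2 := by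
  simp [eulerDeriv]

theorem contDiff_conjugatedPotential (hh : ContDiff ℝ 2 h) (hq : ContDiff ℝ 1 q) :
    ContDiff ℝ 1 (conjugatedPotential h q) :=
  have hh1 : ContDiff ℝ 1 h := hh.of_le one_le_two
  (((contDiff_const.mul hh1).add (contDiff_eulerDeriv hh le_rfl)).sub
    ((hh1.pow 2).mul (contDiff_norm_sq ℝ))).add hq

theorem conjugatedPotential_add_half_eulerDeriv (hh : ContDiff ℝ 2 h) (hq : Differentiable ℝ q)
    (x : E) :
    conjugatedPotential h q x + eulerDeriv (conjugatedPotential h q) x / 2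
      + (finrank ℝ E - 2) ^ 2 / 2 * h x = virialPotential h q x := by
  have hh' : DifferentiableAt ℝ h x := hh.differentiable two_ne_zero x
  have hRh : DifferentiableAt ℝ (eulerDeriv h) x :=
    (contDiff_eulerDeriv hh le_rfl).differentiable one_ne_zero x
  have hq' : DifferentiableAt ℝ q x := hq x
  have hs : DifferentiableAt ℝ (fun y : E => ‖y‖ ^ 2) x := differentiableAt_fun_id.norm_sq ℝ
  have h_euler : eulerDeriv (conjugatedPotential h q) x
      = (2 * finrank ℝ E - 2) * eulerDeriv h x + eulerDeriv (eulerDeriv h) x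
        - 2 * h x * ‖x‖ ^ 2 * (eulerDeriv h x + h x) + eulerDeriv q x := by
    unfold conjugatedPotential
    simp_rw [pow_two (h _)]
    rw [eulerDeriv_add (by fun_prop) hq', eulerDeriv_sub (by fun_prop) (by fun_prop),
      eulerDeriv_add (by fun_prop) hRh, eulerDeriv_const_mul _ hh', eulerDeriv_mul (by fun_prop) hs,
      eulerDeriv_mul hh' hh', eulerDeriv_norm_sq]
    ring
  rw [h_euler, conjugatedPotential, virialPotential]
  ring

variable [FiniteDimensional ℝ E]

namespace IsRadialWeight

theorem const_nonneg (hw : IsRadialWeight f h A) : 0 ≤ A :=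
  nonneg_of_mul_nonneg_left ((hw.slope_nonneg 0).trans (hw.slope_le 0))
    (inv_pos.mpr (japaneseBracket_pos 0))

theorem div_japaneseBracket_le (hw : IsRadialWeight f h A) (x : E) : A / japaneseBracket x ≤ A :=
  div_le_self hw.const_nonneg (one_le_japaneseBracket x)

theorem slope_mul_norm_le (hw : IsRadialWeight f h A) (x : E) : h x * ‖x‖ ≤ A :=
  calc h x * ‖x‖ ≤ h x * japaneseBracket x :=
        mul_le_mul_of_nonneg_left (norm_le_japaneseBracket x) (hw.slope_nonneg x)
    _ ≤ A := (le_div_iff₀ (japaneseBracket_pos x)).mp (hw.slope_le x)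

theorem abs_slope_mul_norm_sq_mul_le (hw : IsRadialWeight f h A) (x : E) :
    |h x * ‖x‖ ^ 2 * (2 * h x + eulerDeriv h x)| ≤ 3 * A ^ 2 := by
  have hA := hw.const_nonneg
  have h_slope := hw.slope_nonneg x
  have h_bracket := japaneseBracket_pos x
  have h_factor : |2 * h x + eulerDeriv h x| ≤ 3 * (A / japaneseBracket x) := by
    have h_euler := abs_le.mp (hw.abs_eulerDeriv_slope_le x)
    have h_le := hw.slope_le x
    exact abs_le.mpr ⟨by linarith, by linarith⟩
  calc |h x * ‖x‖ ^ 2 * (2 * h x + eulerDeriv h x)|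
      = h x * ‖x‖ * ‖x‖ * |2 * h x + eulerDeriv h x| := by
        rw [abs_mul, abs_of_nonneg (by positivity)]
        ring
    _ ≤ A * japaneseBracket x * (3 * (A / japaneseBracket x)) := by
        gcongr
        · exact hw.slope_mul_norm_le x
        · exact norm_le_japaneseBracket x
    _ = 3 * A ^ 2 := by field_simp

theorem abs_dimensional_term_le (hw : IsRadialWeight f h A) (x : E) :
    |finrank ℝ E ^ 2 / 2 * h x + finrank ℝ E * eulerDeriv h x + eulerDeriv (eulerDeriv h) x / 2|
      ≤ (finrank ℝ E + 1) ^ 2 / 2 * (A / japaneseBracket x) := by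
  have h_slope : |(finrank ℝ E ^ 2 / 2 : ℝ) * h x|
      ≤ finrank ℝ E ^ 2 / 2 * (A / japaneseBracket x) := by
    rw [abs_of_nonneg (mul_nonneg (by positivity) (hw.slope_nonneg x))]
    exact mul_le_mul_of_nonneg_left (hw.slope_le x) (by positivity)
  have h_euler : |finrank ℝ E * eulerDeriv h x| ≤ finrank ℝ E * (A / japaneseBracket x) := by
    rw [abs_mul, Nat.abs_cast]
    exact mul_le_mul_of_nonneg_left (hw.abs_eulerDeriv_slope_le x) (Nat.cast_nonneg _)
  have h_euler_euler : |eulerDeriv (eulerDeriv h) x / 2| ≤ A / japaneseBracket x / 2 := by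
    rw [abs_div, abs_two]
    exact div_le_div_of_nonneg_right (hw.abs_eulerDeriv_eulerDeriv_slope_le x) zero_le_two
  linarith [abs_add_three ((finrank ℝ E ^ 2 / 2 : ℝ) * h x) (finrank ℝ E * eulerDeriv h x)
    (eulerDeriv (eulerDeriv h) x / 2)]

theorem abs_conjugatedPotential_le (hw : IsRadialWeight f h A) {x : E} (hq : |q x| ≤ M) :
    |conjugatedPotential h q x| ≤ (2 * finrank ℝ E + 3) * A + A ^ 2 + M := by
  have h_slope : |(2 * finrank ℝ E - 2) * h x| ≤ (2 * finrank ℝ E + 2) * A := by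
    have h_le := (hw.slope_le x).trans (hw.div_japaneseBracket_le x)
    rw [abs_mul, abs_of_nonneg (hw.slope_nonneg x)]
    refine mul_le_mul (abs_le.mpr ⟨?_, ?_⟩) h_le (hw.slope_nonneg x) (by positivity) <;>
      linarith [(finrank ℝ E).cast_nonneg (α := ℝ)]
  have h_euler := (hw.abs_eulerDeriv_slope_le x).trans (hw.div_japaneseBracket_le x)
  have h_square : h x ^ 2 * ‖x‖ ^ 2 ≤ A ^ 2 := by
    rw [← mul_pow]
    exact pow_le_pow_left₀ (mul_nonneg (hw.slope_nonneg x) (norm_nonneg x))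
      (hw.slope_mul_norm_le x) 2
  rw [abs_le] at h_slope h_euler hq ⊢
  unfold conjugatedPotential
  constructor <;> nlinarith [sq_nonneg (h x * ‖x‖)]

theorem abs_virialPotential_le (hw : IsRadialWeight f h A) {x : E}
    (hq : |q x + eulerDeriv q x / 2| ≤ M) :
    |virialPotential h q x| ≤ M + 3 * A ^ 2 + (finrank ℝ E + 1) ^ 2 / 2 * A := by
  have h_drift := hw.abs_slope_mul_norm_sq_mul_le x
  have h_dim := (hw.abs_dimensional_term_le x).trans
    (mul_le_mul_of_nonneg_left (hw.div_japaneseBracket_le x) (by positivity))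
  rw [abs_le] at hq h_drift h_dim ⊢
  unfold virialPotential
  constructor <;> linarith

theorem laplacian_exp_mul_eq (hw : IsRadialWeight f h A) (hu : ContDiff ℝ 2 u)
    (hΔ : ∀ x, Δ u x = q x * u x) (x : E) :
    Δ (fun y => Real.exp (f y) * u y) x
      = 2 * h x * eulerDeriv (fun y => Real.exp (f y) * u y) x
        + (conjugatedPotential h q x - (finrank ℝ E - 2) * h x) * (Real.exp (f x) * u x) := by
  rw [laplacian_exp_mul hw.contDiff_weight (hw.contDiff_slope.differentiable two_ne_zero x)
    hw.gradient_eq hu, hΔ, conjugatedPotential]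
  ring

variable [MeasurableSpace E] [BorelSpace E] {μ : Measure E}

theorem integrable_virialPotential_mul_sq {φ : E → ℝ} (hw : IsRadialWeight f h A)
    (hq : ContDiff ℝ 1 q) (hM : ∀ x, |q x + eulerDeriv q x / 2| ≤ M)
    (hφ2 : Integrable (fun x => φ x ^ 2) μ) :
    Integrable (fun x => virialPotential h q x * φ x ^ 2) μ := by
  have h_slope : Continuous h := hw.contDiff_slope.continuous
  have h_euler : ContDiff ℝ 1 (eulerDeriv h) := contDiff_eulerDeriv hw.contDiff_slope le_rfl
  have h_euler_cont : Continuous (eulerDeriv h) := h_euler.continuous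
  have h_euler_euler : Continuous (eulerDeriv (eulerDeriv h)) :=
    (contDiff_eulerDeriv (m := 0) h_euler le_rfl).continuous
  have h_euler_q : Continuous (eulerDeriv q) := (contDiff_eulerDeriv (m := 0) hq le_rfl).continuous
  have hq_cont : Continuous q := hq.continuous
  have h_cont : Continuous (virialPotential h q) := by
    unfold virialPotential
    fun_prop
  exact hφ2.bdd_mul h_cont.aestronglyMeasurable
    (.of_forall fun x => hw.abs_virialPotential_le (hM x))

variable [μ.IsAddHaarMeasure]

theorem integrable_norm_gradient_exp_mul_sq (hw : IsRadialWeight f h A) (hu : ContDiff ℝ 2 u)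
    (hΔ : ∀ x, Δ u x = q x * u x) (hM : ∀ x, |q x| ≤ M)
    (hφ2 : Integrable (fun x => (Real.exp (f x) * u x) ^ 2) μ) :
    Integrable (fun x => ‖∇ (fun y => Real.exp (f y) * u y) x‖ ^ 2) μ := by
  refine integrable_norm_gradient_sq_of_laplacian_eq (hw.contDiff_weight.exp.mul hu) hφ2
    (hw.laplacian_exp_mul_eq hu hΔ)
    (B := (2 * finrank ℝ E + 3) * A + A ^ 2 + M + (finrank ℝ E + 2) * A)
    (fun x => by simpa [abs_of_nonneg (hw.slope_nonneg x)] using hw.slope_mul_norm_le x)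
    fun x => (abs_sub _ _).trans (add_le_add (hw.abs_conjugatedPotential_le (hM x)) ?_)
  rw [abs_mul, abs_of_nonneg (hw.slope_nonneg x)]
  refine mul_le_mul (abs_le.mpr ⟨?_, ?_⟩)
    ((hw.slope_le x).trans (hw.div_japaneseBracket_le x)) (hw.slope_nonneg x) (by positivity) <;>
    linarith [(finrank ℝ E).cast_nonneg (α := ℝ)]

theorem integral_virialPotential_mul_exp_mul_sq_nonneg (hw : IsRadialWeight f h A)
    (hq : ContDiff ℝ 1 q) (hM : ∀ x, |q x + eulerDeriv q x / 2| ≤ M) (hu : ContDiff ℝ 2 u)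
    (hΔ : ∀ x, Δ u x = q x * u x)
    (hφ2 : Integrable (fun x => (Real.exp (f x) * u x) ^ 2) μ) :
    0 ≤ ∫ x, virialPotential h q x * (Real.exp (f x) * u x) ^ 2 ∂μ := by
  have hq_diff : Differentiable ℝ q := hq.differentiable one_ne_zero
  have hqM : ∀ x, |q x| ≤ M := abs_le_of_abs_add_half_eulerDeriv_le hq_diff hM
  have h_int := hw.integrable_virialPotential_mul_sq hq hM hφ2
  simp only [← conjugatedPotential_add_half_eulerDeriv hw.contDiff_slope hq_diff] at h_int ⊢
  exact integral_virial_mul_sq_nonneg (hw.contDiff_weight.exp.mul hu)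
    (contDiff_conjugatedPotential hw.contDiff_slope hq) (hw.laplacian_exp_mul_eq hu hΔ)
    hw.slope_nonneg (fun x => hw.abs_conjugatedPotential_le (hqM x)) hφ2
    (hw.integrable_norm_gradient_exp_mul_sq hu hΔ hqM hφ2) h_int

end IsRadialWeight

end WeightedVirial

section JapaneseBracket

variable {E : Type*} [NormedAddCommGroup E] [InnerProductSpace ℝ E]

theorem contDiff_japaneseBracket {n : ℕ∞} : ContDiff ℝ n (japaneseBracket (E := E)) :=
  (contDiff_const.add (contDiff_norm_sq ℝ)).sqrt fun x => by positivity

theorem hasFDerivAt_comp_japaneseBracket {G : ℝ → ℝ} {G' : ℝ} {x : E}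
    (hG : HasDerivAt G G' (japaneseBracket x)) :
    HasFDerivAt (fun y => G (japaneseBracket y)) ((G' / japaneseBracket x) • innerSL ℝ x) x := by
  have h_bracket : HasFDerivAt japaneseBracket ((japaneseBracket x)⁻¹ • innerSL ℝ x) x := by
    refine (((hasStrictFDerivAt_norm_sq x).hasFDerivAt.const_add 1).sqrt
      (by positivity)).congr_fderiv ?_
    ext y
    simp [japaneseBracket]
    ring
  refine (hG.comp_hasFDerivAt x h_bracket).congr_fderiv ?_
  rw [smul_smul, div_eq_mul_inv]

theorem gradient_comp_japaneseBracket [CompleteSpace E] {G : ℝ → ℝ} {G' : ℝ} {x : E}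
    (hG : HasDerivAt G G' (japaneseBracket x)) :
    ∇ (fun y => G (japaneseBracket y)) x = (G' / japaneseBracket x) • x := by
  refine HasGradientAt.gradient ((hasFDerivAt_comp_japaneseBracket hG).congr_fderiv ?_)
  ext y
  simp

theorem eulerDeriv_comp_japaneseBracket {G : ℝ → ℝ} {G' : ℝ} {x : E}
    (hG : HasDerivAt G G' (japaneseBracket x)) :
    eulerDeriv (fun y => G (japaneseBracket y)) x
      = G' * (japaneseBracket x - (japaneseBracket x)⁻¹) := by
  have h_norm : ‖x‖ ^ 2 = japaneseBracket x ^ 2 - 1 := by rw [japaneseBracket_sq]; ring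
  have h_ne := (japaneseBracket_pos x).ne'
  rw [eulerDeriv, (hasFDerivAt_comp_japaneseBracket hG).fderiv]
  simp only [smul_apply, innerSL_apply_apply, real_inner_self_eq_norm_sq,
    smul_eq_mul, h_norm]
  field_simp

end JapaneseBracket

section DampedWeight

variable {α γ ε r t w : ℝ}

/-- The factor by which the exponential gain `γ * r` is truncated in `dampedProfile`. -/
noncomputable def damping (ε r : ℝ) : ℝ :=
  (1 + ε * r)⁻¹

/-- The profile `α * r + γ * r / (1 + ε * r)`, which interpolates between the exponents
`α * r + γ / ε` and, as `ε → 0`, `(α + γ) * r`. -/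
noncomputable def dampedProfile (α γ ε r : ℝ) : ℝ :=
  α * r + γ * (r * damping ε r)

/-- `G' r / r` for `G` the damped profile, so that the weight `G (japaneseBracket x)` has gradient
`dampedSlope α γ ε (japaneseBracket x) • x`. -/
noncomputable def dampedSlope (α γ ε r : ℝ) : ℝ :=
  (α + γ * damping ε r ^ 2) / r

theorem damping_nonneg (hε : 0 ≤ ε) (hr : 0 ≤ r) : 0 ≤ damping ε r := by
  unfold damping
  positivity

theorem damping_le_one (hε : 0 ≤ ε) (hr : 0 ≤ r) : damping ε r ≤ 1 :=
  inv_le_one_of_one_le₀ (le_add_of_nonneg_right (by positivity))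

theorem hasDerivAt_damping (hε : 0 ≤ ε) (hr : 0 < r) :
    HasDerivAt (damping ε) (-(damping ε r * (1 - damping ε r) / r)) r := by
  have h_ne : 1 + ε * r ≠ 0 := by positivity
  refine ((((hasDerivAt_id r).const_mul ε).const_add 1).inv h_ne).congr_deriv ?_
  simp only [damping, id]
  field_simp
  ring

theorem hasDerivAt_dampedProfile (hε : 0 ≤ ε) (hr : 0 < r) :
    HasDerivAt (dampedProfile α γ ε) (α + γ * damping ε r ^ 2) r := by
  refine (((hasDerivAt_id r).const_mul α).add
    (((hasDerivAt_id r).mul (hasDerivAt_damping hε hr)).const_mul γ)).congr_deriv ?_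
  simp only [id]
  field_simp
  ring

theorem hasDerivAt_dampedSlope (hε : 0 ≤ ε) (hr : 0 < r) :
    HasDerivAt (dampedSlope α γ ε)
      (-((α + γ * (3 * damping ε r ^ 2 - 2 * damping ε r ^ 3)) / r ^ 2)) r := by
  refine (((((hasDerivAt_damping hε hr).pow 2).const_mul γ).const_add α).div (hasDerivAt_id r)
    hr.ne').congr_deriv ?_
  simp only [id, Pi.pow_apply]
  field_simp
  push_cast
  ring

/-- The Euler derivative of the damped slope, as a function of `r = japaneseBracket x`. -/
noncomputable def dampedSlopeEuler (α γ ε r : ℝ) : ℝ :=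
  -((α + γ * (3 * damping ε r ^ 2 - 2 * damping ε r ^ 3)) / r ^ 2) * (r - r⁻¹)

theorem hasDerivAt_dampedSlopeEuler (hε : 0 ≤ ε) (hr : 0 < r) :
    HasDerivAt (dampedSlopeEuler α γ ε)
      ((6 * γ * (damping ε r * (1 - damping ε r)) ^ 2 * (1 - (r ^ 2)⁻¹)
        - (α + γ * (3 * damping ε r ^ 2 - 2 * damping ε r ^ 3)) * (3 * (r ^ 2)⁻¹ - 1)) / r ^ 2)
      r := by
  have h_damping := hasDerivAt_damping hε hr
  have h_numerator := (((h_damping.pow 2).const_mul 3).sub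
    ((h_damping.pow 3).const_mul 2)).const_mul γ |>.const_add α
  refine ((h_numerator.div (hasDerivAt_pow 2 r) (by positivity)).neg.mul
    ((hasDerivAt_id r).sub (hasDerivAt_inv hr.ne'))).congr_deriv ?_
  simp only [id, Pi.pow_apply, Pi.sub_apply, Pi.neg_apply, Pi.div_apply]
  field_simp
  push_cast
  ring

theorem smoothstep_mem_Icc (ht : t ∈ Set.Icc (0 : ℝ) 1) :
    3 * t ^ 2 - 2 * t ^ 3 ∈ Set.Icc (0 : ℝ) 1 := by
  obtain ⟨ht0, ht1⟩ := ht
  constructor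
  · nlinarith [mul_nonneg (sq_nonneg t) (sub_nonneg.mpr ht1)]
  · nlinarith [mul_nonneg (sq_nonneg (1 - t)) ht0]

theorem damping_mem_Icc (hε : 0 ≤ ε) (hr : 0 ≤ r) : damping ε r ∈ Set.Icc (0 : ℝ) 1 :=
  ⟨damping_nonneg hε hr, damping_le_one hε hr⟩

theorem dampedSlope_nonneg (hα : 0 ≤ α) (hγ : 0 ≤ γ) (hr : 0 ≤ r) : 0 ≤ dampedSlope α γ ε r := by
  unfold dampedSlope
  positivity

theorem dampedSlope_le (hγ : 0 ≤ γ) (hε : 0 ≤ ε) (hr : 0 ≤ r) :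
    dampedSlope α γ ε r ≤ (α + γ) / r := by
  have h_sq : damping ε r ^ 2 ≤ 1 := pow_le_one₀ (damping_nonneg hε hr) (damping_le_one hε hr)
  unfold dampedSlope
  gcongr
  exact mul_le_of_le_one_right hγ h_sq

theorem sub_inv_mem_Icc (hr : 1 ≤ r) : r - r⁻¹ ∈ Set.Icc 0 r :=
  ⟨sub_nonneg.mpr ((inv_le_one_of_one_le₀ hr).trans hr), sub_le_self _ (by positivity)⟩

theorem abs_dampedSlopeEuler_le (hα : 0 ≤ α) (hγ : 0 ≤ γ) (hε : 0 ≤ ε) (hr : 1 ≤ r) :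
    |dampedSlopeEuler α γ ε r| ≤ (α + γ) / r := by
  obtain ⟨h_step0, h_step1⟩ := smoothstep_mem_Icc (damping_mem_Icc hε (zero_le_one.trans hr))
  obtain ⟨h_sub0, h_sub1⟩ := sub_inv_mem_Icc hr
  rw [dampedSlopeEuler, neg_mul, abs_neg, abs_of_nonneg (by positivity)]
  calc _ ≤ (α + γ) / r ^ 2 * r := by
        gcongr
        exact mul_le_of_le_one_right hγ h_step1
    _ = (α + γ) / r := by field_simp

theorem abs_eulerDeriv_dampedSlopeEuler_le (hα : 0 ≤ α) (hγ : 0 ≤ γ) (ht : t ∈ Set.Icc (0 : ℝ) 1)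
    (hr : 1 ≤ r) :
    |(6 * γ * (t * (1 - t)) ^ 2 * (1 - (r ^ 2)⁻¹)
        - (α + γ * (3 * t ^ 2 - 2 * t ^ 3)) * (3 * (r ^ 2)⁻¹ - 1)) / r ^ 2 * (r - r⁻¹)|
      ≤ 3 * (α + γ) / r := by
  obtain ⟨h_step0, h_step1⟩ := smoothstep_mem_Icc ht
  obtain ⟨h_sub0, h_sub1⟩ := sub_inv_mem_Icc hr
  have h_inv0 : 0 ≤ (r ^ 2)⁻¹ := by positivity
  have h_inv1 : (r ^ 2)⁻¹ ≤ 1 := inv_le_one_of_one_le₀ (one_le_pow₀ hr)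
  have h_quad : (t * (1 - t)) ^ 2 ≤ 1 / 16 := by
    have h_prod : t * (1 - t) ≤ 1 / 4 := by nlinarith [sq_nonneg (t - 1 / 2)]
    exact (pow_le_pow_left₀ (mul_nonneg ht.1 (sub_nonneg.mpr ht.2)) h_prod 2).trans (by norm_num)
  have h_first : |6 * γ * (t * (1 - t)) ^ 2 * (1 - (r ^ 2)⁻¹)| ≤ 6 * γ * (1 / 16) * 1 := by
    rw [abs_of_nonneg (mul_nonneg (by positivity) (by linarith))]
    gcongr
    linarith
  have h_second : |(α + γ * (3 * t ^ 2 - 2 * t ^ 3)) * (3 * (r ^ 2)⁻¹ - 1)| ≤ (α + γ) * 2 := by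
    rw [abs_mul, abs_of_nonneg (by positivity)]
    gcongr
    · exact mul_le_of_le_one_right hγ h_step1
    · exact abs_le.mpr ⟨by linarith, by linarith⟩
  rw [abs_mul, abs_div, abs_of_nonneg h_sub0, abs_of_pos (by positivity : 0 < r ^ 2)]
  calc _ ≤ 3 * (α + γ) / r ^ 2 * r := by
        gcongr
        linarith [abs_sub (6 * γ * (t * (1 - t)) ^ 2 * (1 - (r ^ 2)⁻¹))
          ((α + γ * (3 * t ^ 2 - 2 * t ^ 3)) * (3 * (r ^ 2)⁻¹ - 1))]
    _ = 3 * (α + γ) / r := by field_simp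

-- A negative second factor forces `α ≤ γ / 4`, so a large `α` can only help.
theorem neg_half_sq_le_mul (hα : 0 ≤ α) (hγ : 0 ≤ γ) (ht : t ∈ Set.Icc (0 : ℝ) 1)
    (hw : w ∈ Set.Icc (0 : ℝ) 1) :
    -(γ ^ 2 / 2) ≤ w * (α + γ * t ^ 2)
      * (2 * (α + γ * t ^ 2) - w * (α + γ * (3 * t ^ 2 - 2 * t ^ 3))) := by
  obtain ⟨h_step0, h_step1⟩ := smoothstep_mem_Icc ht
  have h_sq : t ^ 2 ≤ 1 := pow_le_one₀ ht.1 ht.2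
  have h_cubic : t ^ 2 - 2 * t ^ 3 ≤ 1 / 4 := by
    nlinarith [mul_nonneg ht.1 (sq_nonneg (t - 1 / 4))]
  set slope := α + γ * t ^ 2 with h_slope
  set factor := 2 * slope - w * (α + γ * (3 * t ^ 2 - 2 * t ^ 3)) with h_factor
  have h_slope0 : 0 ≤ slope := by positivity
  have h_lower : α - γ / 4 ≤ factor := by
    linarith [h_slope, h_factor, mul_le_mul_of_nonneg_left h_cubic hγ,
      mul_le_of_le_one_left (by positivity : 0 ≤ α + γ * (3 * t ^ 2 - 2 * t ^ 3)) hw.2]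
  rcases le_total 0 factor with h_pos | h_neg
  · have h_prod : 0 ≤ w * slope * factor := mul_nonneg (mul_nonneg hw.1 h_slope0) h_pos
    linarith [sq_nonneg γ]
  · have h_prod : w * slope * -factor ≤ 1 * (5 / 4 * γ) * (γ / 4) := by
      gcongr
      · linarith
      · exact hw.2
      · linarith [mul_le_of_le_one_right hγ h_sq]
      · linarith
    linarith [sq_nonneg γ]

theorem neg_half_sq_le_dampedSlope_mul (hα : 0 ≤ α) (hγ : 0 ≤ γ) (hε : 0 ≤ ε) (hr : 1 ≤ r) :
    -(γ ^ 2 / 2) ≤ dampedSlope α γ ε r * (r ^ 2 - 1)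
      * (2 * dampedSlope α γ ε r + dampedSlopeEuler α γ ε r) := by
  have hw : 1 - (r ^ 2)⁻¹ ∈ Set.Icc (0 : ℝ) 1 :=
    ⟨sub_nonneg.mpr (inv_le_one_of_one_le₀ (one_le_pow₀ hr)), sub_le_self _ (by positivity)⟩
  convert neg_half_sq_le_mul hα hγ (damping_mem_Icc hε (zero_le_one.trans hr)) hw using 1
  rw [dampedSlope, dampedSlopeEuler]
  field_simp
  ring

theorem dampedProfile_le_add_mul (hγ : 0 ≤ γ) (hε : 0 ≤ ε) (hr : 0 ≤ r) :
    dampedProfile α γ ε r ≤ (α + γ) * r := by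
  have h_le := mul_le_mul_of_nonneg_left (mul_le_of_le_one_right hr (damping_le_one hε hr)) hγ
  rw [dampedProfile]
  linarith

theorem dampedProfile_le_mul_add_div (hγ : 0 ≤ γ) (hε : 0 < ε) (hr : 0 ≤ r) :
    dampedProfile α γ ε r ≤ α * r + γ / ε := by
  have h_le : r * damping ε r ≤ ε⁻¹ := by
    rw [damping, ← div_eq_mul_inv, div_le_iff₀ (by positivity)]
    field_simp
    linarith
  exact add_le_add_right (mul_le_mul_of_nonneg_left h_le hγ) _

theorem tendsto_dampedProfile (α γ r : ℝ) :
    Tendsto (dampedProfile α γ · r) (𝓝 0) (𝓝 ((α + γ) * r)) := by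
  have h_cont : ContinuousAt (dampedProfile α γ · r) 0 := by
    unfold dampedProfile damping
    fun_prop (disch := simp)
  convert h_cont.tendsto using 2
  simp [dampedProfile, damping]
  ring

variable {E : Type*} [NormedAddCommGroup E] [InnerProductSpace ℝ E]

theorem contDiff_damping_japaneseBracket (hε : 0 ≤ ε) {n : ℕ∞} :
    ContDiff ℝ n fun x : E => damping ε (japaneseBracket x) :=
  (contDiff_const.add (contDiff_const.mul contDiff_japaneseBracket)).inv fun x => by
    have := japaneseBracket_pos x
    positivity

theorem contDiff_dampedProfile_japaneseBracket (hε : 0 ≤ ε) {n : ℕ∞} :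
    ContDiff ℝ n fun x : E => dampedProfile α γ ε (japaneseBracket x) :=
  (contDiff_const.mul contDiff_japaneseBracket).add (contDiff_const.mul
    (contDiff_japaneseBracket.mul (contDiff_damping_japaneseBracket hε)))

theorem contDiff_dampedSlope_japaneseBracket (hε : 0 ≤ ε) {n : ℕ∞} :
    ContDiff ℝ n fun x : E => dampedSlope α γ ε (japaneseBracket x) :=
  (contDiff_const.add (contDiff_const.mul ((contDiff_damping_japaneseBracket hε).pow 2))).div
    contDiff_japaneseBracket fun x => (japaneseBracket_pos x).ne'

theorem eulerDeriv_dampedSlope_japaneseBracket (hε : 0 ≤ ε) :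
    eulerDeriv (fun x : E => dampedSlope α γ ε (japaneseBracket x))
      = fun x => dampedSlopeEuler α γ ε (japaneseBracket x) :=
  funext fun x => eulerDeriv_comp_japaneseBracket
    (hasDerivAt_dampedSlope hε (japaneseBracket_pos x))

theorem isRadialWeight_dampedProfile [FiniteDimensional ℝ E] (hα : 0 ≤ α) (hγ : 0 ≤ γ)
    (hε : 0 ≤ ε) :
    IsRadialWeight (fun x : E => dampedProfile α γ ε (japaneseBracket x))
      (fun x => dampedSlope α γ ε (japaneseBracket x)) (3 * (α + γ)) where
  contDiff_weight := contDiff_dampedProfile_japaneseBracket hε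
  contDiff_slope := contDiff_dampedSlope_japaneseBracket hε
  gradient_eq x :=
    gradient_comp_japaneseBracket (hasDerivAt_dampedProfile hε (japaneseBracket_pos x))
  slope_nonneg x := dampedSlope_nonneg hα hγ (japaneseBracket_pos x).le
  slope_le x := (dampedSlope_le hγ hε (japaneseBracket_pos x).le).trans <| by
    have := japaneseBracket_pos x
    gcongr
    linarith
  abs_eulerDeriv_slope_le x := by
    rw [eulerDeriv_dampedSlope_japaneseBracket hε]
    refine (abs_dampedSlopeEuler_le hα hγ hε (one_le_japaneseBracket x)).trans ?_
    have := japaneseBracket_pos x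
    gcongr
    linarith
  abs_eulerDeriv_eulerDeriv_slope_le x := by
    rw [eulerDeriv_dampedSlope_japaneseBracket hε,
      eulerDeriv_comp_japaneseBracket (hasDerivAt_dampedSlopeEuler hε (japaneseBracket_pos x))]
    exact abs_eulerDeriv_dampedSlopeEuler_le hα hγ (damping_mem_Icc hε (japaneseBracket_pos x).le)
      (one_le_japaneseBracket x)

end DampedWeight

section Bootstrap

theorem exists_forall_norm_le_of_tendsto_cocompact {X F : Type*} [TopologicalSpace X]
    [SeminormedAddCommGroup F] {f : X → F} {a : F} (hf : Continuous f)
    (hlim : Tendsto f (cocompact X) (𝓝 a)) : ∃ M, ∀ x, ‖f x‖ ≤ M := by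
  obtain ⟨K, hK, hKf⟩ := mem_cocompact.mp (hlim.norm.eventually_le_const (lt_add_one ‖a‖))
  obtain ⟨C, hC⟩ := hK.exists_bound_of_continuousOn hf.continuousOn
  refine ⟨max C (‖a‖ + 1), fun x => ?_⟩
  by_cases hx : x ∈ K
  · exact (hC x hx).trans (le_max_left _ _)
  · exact (hKf hx).trans (le_max_right _ _)

theorem integral_le_of_integral_mul_nonneg {X : Type*} [MeasurableSpace X] {μ : Measure X}
    {S : Set X} {W g p : X → ℝ} {B C c : ℝ} (hc : 0 < c) (hB : 0 ≤ B) (hC : 0 ≤ C)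
    (hg0 : ∀ x, 0 ≤ g x) (hp0 : ∀ x, 0 ≤ p x)
    (hWC : ∀ x, W x ≤ C) (hWc : ∀ x ∉ S, W x ≤ -c) (hgB : ∀ x ∈ S, g x ≤ B * p x)
    (hg : Integrable g μ) (hp : Integrable p μ) (hWg : Integrable (fun x => W x * g x) μ)
    (h_nonneg : 0 ≤ ∫ x, W x * g x ∂μ) :
    ∫ x, g x ∂μ ≤ (C + c) * B / c * ∫ x, p x ∂μ := by
  have h_pointwise (x : X) : W x * g x + c * g x ≤ (C + c) * B * p x := by
    by_cases hx : x ∈ S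
    · calc W x * g x + c * g x = (W x + c) * g x := by ring
        _ ≤ (C + c) * (B * p x) := by
            gcongr
            · exact hg0 x
            · exact hWC x
            · exact hgB x hx
        _ = (C + c) * B * p x := by ring
    · have h_neg : (W x + c) * g x ≤ 0 :=
        mul_nonpos_of_nonpos_of_nonneg (by linarith [hWc x hx]) (hg0 x)
      have h_pos : 0 ≤ (C + c) * B * p x := mul_nonneg (by positivity) (hp0 x)
      linarith
  have h_integral := integral_mono (hWg.add (hg.const_mul c)) (hp.const_mul _) h_pointwise
  simp only [Pi.add_apply] at h_integral
  rw [integral_add hWg (hg.const_mul c), integral_const_mul, integral_const_mul] at h_integral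
  rw [div_mul_eq_mul_div, le_div_iff₀ hc]
  linarith

variable {E : Type*} [NormedAddCommGroup E] [InnerProductSpace ℝ E] {α γ ε : ℝ} {q u : E → ℝ}

theorem integrable_exp_dampedProfile_mul_sq [MeasurableSpace E] [BorelSpace E] {μ : Measure E}
    (hγ : 0 ≤ γ) (hε : 0 < ε) (hu : Continuous u)
    (hint : Integrable (fun x => (Real.exp (α * japaneseBracket x) * u x) ^ 2) μ) :
    Integrable (fun x => (Real.exp (dampedProfile α γ ε (japaneseBracket x)) * u x) ^ 2) μ := by
  have h_weight : Continuous fun x : E => dampedProfile α γ ε (japaneseBracket x) :=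
    (contDiff_dampedProfile_japaneseBracket (n := 0) hε.le).continuous
  refine (hint.const_mul (Real.exp (γ / ε) ^ 2)).mono'
    (by fun_prop : Continuous _).aestronglyMeasurable (.of_forall fun x => ?_)
  rw [Real.norm_of_nonneg (sq_nonneg _), ← mul_pow, ← mul_assoc, ← Real.exp_add, add_comm (γ / ε),
    mul_pow, mul_pow]
  gcongr
  exact dampedProfile_le_mul_add_div hγ hε (japaneseBracket_pos x).le

variable [FiniteDimensional ℝ E]

theorem virialPotential_dampedSlope_le (hα : 0 ≤ α) (hγ : 0 ≤ γ) (hε : 0 ≤ ε) (x : E) :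
    virialPotential (fun y => dampedSlope α γ ε (japaneseBracket y)) q x
      ≤ q x + eulerDeriv q x / 2 + γ ^ 2 / 2
        + (finrank ℝ E + 1) ^ 2 / 2 * (3 * (α + γ) / japaneseBracket x) := by
  have h_dim := (abs_le.mp
    ((isRadialWeight_dampedProfile (E := E) hα hγ hε).abs_dimensional_term_le x)).2
  have h_drift := neg_half_sq_le_dampedSlope_mul hα hγ hε (one_le_japaneseBracket x)
  rw [japaneseBracket_sq, add_sub_cancel_left,
    ← congrFun (eulerDeriv_dampedSlope_japaneseBracket hε) x] at h_drift
  rw [virialPotential]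
  linarith

theorem eventually_virialPotential_dampedSlope_le (hα : 0 ≤ α) (hγ : 0 < γ)
    (hq : Tendsto (fun x => q x + eulerDeriv q x / 2) (cocompact E) (𝓝 (-γ ^ 2))) :
    ∀ᶠ x in cocompact E, ∀ ε, 0 ≤ ε →
      virialPotential (fun y => dampedSlope α γ ε (japaneseBracket y)) q x ≤ -(γ ^ 2 / 4) := by
  have h_bracket : Tendsto (japaneseBracket (E := E)) (cocompact E) atTop :=
    tendsto_atTop_mono norm_le_japaneseBracket tendsto_norm_cocompact_atTop
  have h_lim := (hq.add_const (γ ^ 2 / 2)).add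
    ((h_bracket.const_div_atTop (3 * (α + γ))).const_mul ((finrank ℝ E + 1) ^ 2 / 2 : ℝ))
  filter_upwards [h_lim.eventually_le_const (u := -(γ ^ 2 / 4)) (by nlinarith)] with x hx ε hε
  exact (virialPotential_dampedSlope_le hα hγ.le hε x).trans hx

variable [MeasurableSpace E] [BorelSpace E] {μ : Measure E} [μ.IsAddHaarMeasure]

theorem exists_integral_exp_dampedProfile_mul_sq_le (hα : 0 ≤ α) (hγ : 0 < γ)
    (hq : ContDiff ℝ 1 q)
    (hq_lim : Tendsto (fun x => q x + eulerDeriv q x / 2) (cocompact E) (𝓝 (-γ ^ 2)))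
    (hu : ContDiff ℝ 2 u) (hΔ : ∀ x, Δ u x = q x * u x) (hu2 : Integrable (fun x => u x ^ 2) μ)
    (hint : Integrable (fun x => (Real.exp (α * japaneseBracket x) * u x) ^ 2) μ) :
    ∃ M, ∀ ε, 0 < ε →
      ∫ x, (Real.exp (dampedProfile α γ ε (japaneseBracket x)) * u x) ^ 2 ∂μ ≤ M := by
  have hq_cont : Continuous fun x => q x + eulerDeriv q x / 2 :=
    hq.continuous.add ((contDiff_eulerDeriv (m := 0) hq le_rfl).continuous.div_const 2)
  obtain ⟨M, hM⟩ := exists_forall_norm_le_of_tendsto_cocompact hq_cont hq_lim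
  obtain ⟨K, hK, hK_neg⟩ :=
    mem_cocompact.mp (eventually_virialPotential_dampedSlope_le hα hγ hq_lim)
  obtain ⟨R, hR⟩ := hK.exists_bound_of_continuousOn
    (contDiff_japaneseBracket (n := 0)).continuous.continuousOn
  let C := M + 3 * (3 * (α + γ)) ^ 2 + (finrank ℝ E + 1) ^ 2 / 2 * (3 * (α + γ))
  refine ⟨(C + γ ^ 2 / 4) * Real.exp ((α + γ) * R) ^ 2 / (γ ^ 2 / 4) * ∫ x, u x ^ 2 ∂μ,
    fun ε hε => ?_⟩
  have hw := isRadialWeight_dampedProfile (E := E) hα hγ.le hε.le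
  have hφ2 := integrable_exp_dampedProfile_mul_sq hγ.le hε hu.continuous hint
  refine integral_le_of_integral_mul_nonneg (S := K) (by positivity) (sq_nonneg _)
    ((abs_nonneg _).trans (hw.abs_virialPotential_le (hM 0)))
    (fun x => sq_nonneg _) (fun x => sq_nonneg _)
    (fun x => le_of_abs_le (hw.abs_virialPotential_le (hM x)))
    (fun x hx => hK_neg hx ε hε.le) (fun x hx => ?_) hφ2 hu2
    (hw.integrable_virialPotential_mul_sq hq hM hφ2)
    (hw.integral_virialPotential_mul_exp_mul_sq_nonneg hq hM hu hΔ hφ2)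
  rw [mul_pow]
  gcongr
  calc _ ≤ (α + γ) * japaneseBracket x :=
        dampedProfile_le_add_mul hγ.le hε.le (japaneseBracket_pos x).le
    _ ≤ (α + γ) * R := by
        gcongr
        exact le_of_abs_le (hR x hx)

theorem integrable_exp_add_mul_japaneseBracket_mul_sq (hα : 0 ≤ α) (hγ : 0 < γ)
    (hq : ContDiff ℝ 1 q)
    (hq_lim : Tendsto (fun x => q x + eulerDeriv q x / 2) (cocompact E) (𝓝 (-γ ^ 2)))
    (hu : ContDiff ℝ 2 u) (hΔ : ∀ x, Δ u x = q x * u x) (hu2 : Integrable (fun x => u x ^ 2) μ)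
    (hint : Integrable (fun x => (Real.exp (α * japaneseBracket x) * u x) ^ 2) μ) :
    Integrable (fun x => (Real.exp ((α + γ) * japaneseBracket x) * u x) ^ 2) μ := by
  obtain ⟨M, hM⟩ :=
    exists_integral_exp_dampedProfile_mul_sq_le hα hγ hq hq_lim hu hΔ hu2 hint
  have h_pos (k : ℕ) : 0 < 1 / ((k : ℝ) + 1) := Nat.one_div_pos_of_nat
  refine integrable_of_tendsto_of_integral_le
    (fun k => integrable_exp_dampedProfile_mul_sq hγ.le (h_pos k) hu.continuous hint)
    (fun k x => sq_nonneg _) (fun k => hM _ (h_pos k)) fun x => ?_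
  exact ((Real.continuous_exp.tendsto _).comp ((tendsto_dampedProfile α γ _).comp
    tendsto_one_div_add_atTop_nhds_zero_nat) |>.mul_const (u x)).pow 2

theorem integrable_exp_nat_mul_japaneseBracket_mul_sq (hγ : 0 < γ) (hq : ContDiff ℝ 1 q)
    (hq_lim : Tendsto (fun x => q x + eulerDeriv q x / 2) (cocompact E) (𝓝 (-γ ^ 2)))
    (hu : ContDiff ℝ 2 u) (hΔ : ∀ x, Δ u x = q x * u x) (hu2 : Integrable (fun x => u x ^ 2) μ)
    (k : ℕ) : Integrable (fun x => (Real.exp (k * γ * japaneseBracket x) * u x) ^ 2) μ := by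
  induction k with
  | zero => simpa using hu2
  | succ k ih =>
    have h_step := integrable_exp_add_mul_japaneseBracket_mul_sq (by positivity) hγ hq hq_lim
      hu hΔ hu2 ih
    simpa only [Nat.cast_succ, add_one_mul] using h_step

theorem integrable_exp_mul_norm_mul_sq (hγ : 0 < γ) (hq : ContDiff ℝ 1 q)
    (hq_lim : Tendsto (fun x => q x + eulerDeriv q x / 2) (cocompact E) (𝓝 (-γ ^ 2)))
    (hu : ContDiff ℝ 2 u) (hΔ : ∀ x, Δ u x = q x * u x) (hu2 : Integrable (fun x => u x ^ 2) μ)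
    (α : ℝ) : Integrable (fun x => Real.exp (2 * α * ‖x‖) * u x ^ 2) μ := by
  obtain ⟨k, hk⟩ := exists_nat_ge (α / γ)
  have hαk : α ≤ k * γ := (div_le_iff₀ hγ).mp hk
  have hu_cont : Continuous u := hu.continuous
  refine (integrable_exp_nat_mul_japaneseBracket_mul_sq hγ hq hq_lim hu hΔ hu2 k).mono'
    (by fun_prop : Continuous _).aestronglyMeasurable (.of_forall fun x => ?_)
  rw [Real.norm_of_nonneg (by positivity), mul_pow, ← Real.exp_nat_mul, Nat.cast_ofNat, mul_assoc 2]
  gcongr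
  exact norm_le_japaneseBracket x

end Bootstrap

section VectorValued

variable {E : Type*} [NormedAddCommGroup E] [InnerProductSpace ℝ E] [FiniteDimensional ℝ E]
  [MeasurableSpace E] [BorelSpace E] {μ : Measure E} [μ.IsAddHaarMeasure]
  {F : Type*} [NormedAddCommGroup F] [InnerProductSpace ℝ F] [FiniteDimensional ℝ F]

theorem stmt_10_general {V : E → ℝ} {lam : ℝ} {ψ : E → F} (hV : ContDiff ℝ 1 V)
    (hV_lim : Tendsto (fun x => V x + fderiv ℝ V x x / 2) (cocompact E) (𝓝 0)) (hlam : 0 < lam)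
    (hψ : ContDiff ℝ 2 ψ) (hL2 : Integrable (fun x => ‖ψ x‖ ^ 2) μ)
    (heq : ∀ x, -Δ ψ x + V x • ψ x = lam • ψ x) (α : ℝ) :
    Integrable (fun x => Real.exp (2 * α * ‖x‖) * ‖ψ x‖ ^ 2) μ := by
  let b := stdOrthonormalBasis ℝ F
  have hq_lim : Tendsto (fun x => V x - lam + eulerDeriv (fun y => V y - lam) x / 2)
      (cocompact E) (𝓝 (-√lam ^ 2)) := by
    convert hV_lim.sub_const lam using 2 with x
    · rw [eulerDeriv, fderiv_sub_const]
      ring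
    · rw [Real.sq_sqrt hlam.le, zero_sub]
  simp only [← b.sum_sq_inner_right, Finset.mul_sum]
  refine integrable_finsetSum _ fun i _ => integrable_exp_mul_norm_mul_sq
    (Real.sqrt_pos.mpr hlam) (hV.sub contDiff_const) hq_lim (contDiff_const.inner ℝ hψ)
    (fun x => ?_) ?_ α
  · have h_component : Δ (fun y => ⟪b i, ψ y⟫) x = ⟪b i, Δ ψ x⟫ :=
      hψ.contDiffAt.laplacian_CLM_comp_left (l := innerSL ℝ (b i))
    have h_laplacian : Δ ψ x = (V x - lam) • ψ x := by
      rw [sub_smul, ← heq x]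
      abel
    rw [h_component, h_laplacian, real_inner_smul_right]
  · have hψ_cont : Continuous ψ := hψ.continuous
    refine hL2.mono' (by fun_prop : Continuous _).aestronglyMeasurable (.of_forall fun x => ?_)
    rw [Real.norm_of_nonneg (sq_nonneg _), ← sq_abs]
    gcongr
    simpa using abs_real_inner_le_norm (b i) (ψ x)

end VectorValued

section Euclidean

theorem lap_eq_laplacian {n : ℕ} {f : EuclideanSpace ℝ (Fin n) → ℂ} (hf : ContDiff ℝ 2 f)
    (x : EuclideanSpace ℝ (Fin n)) : lap f x = Δ f x := by
  rw [laplacian_eq_iteratedFDeriv_orthonormalBasis f (EuclideanSpace.basisFun (Fin n) ℝ), lap]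
  have h_fderiv : DifferentiableAt ℝ (fderiv ℝ f) x :=
    (hf.fderiv_right (m := 1) le_rfl).differentiable one_ne_zero x
  simp [iteratedFDeriv_two_apply, fderiv_clm_apply h_fderiv (differentiableAt_const _)]

theorem tendsto_add_half_fderiv_of_norm_iteratedFDeriv_le {E : Type*} [NormedAddCommGroup E]
    [NormedSpace ℝ E] [ProperSpace E] {V : E → ℝ} {δ : ℝ} (hδ : 0 < δ)
    (hdecay : ∀ k : ℕ, ∃ C : ℝ, ∀ x,
      ‖iteratedFDeriv ℝ k V x‖ ≤ C * (1 + ‖x‖) ^ (-(δ + (k : ℝ)))) :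
    Tendsto (fun x => V x + fderiv ℝ V x x / 2) (cocompact E) (𝓝 0) := by
  obtain ⟨C₀, hC₀⟩ := hdecay 0
  obtain ⟨C₁, hC₁⟩ := hdecay 1
  have h_norm : Tendsto (fun x : E => 1 + ‖x‖) (cocompact E) atTop :=
    tendsto_atTop_add_const_left _ _ tendsto_norm_cocompact_atTop
  have h_lim := ((tendsto_rpow_neg_atTop hδ).comp h_norm).const_mul (C₀ + C₁ / 2)
  rw [mul_zero] at h_lim
  refine squeeze_zero_norm (fun x => ?_) h_lim
  have h_pos : 0 < 1 + ‖x‖ := by positivity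
  have h_value : ‖V x‖ ≤ C₀ * (1 + ‖x‖) ^ (-δ) := by simpa using hC₀ x
  have h_euler : ‖fderiv ℝ V x x‖ ≤ C₁ * (1 + ‖x‖) ^ (-δ) :=
    calc ‖fderiv ℝ V x x‖ ≤ ‖fderiv ℝ V x‖ * (1 + ‖x‖) :=
          (fderiv ℝ V x).le_opNorm_of_le (le_add_of_nonneg_left zero_le_one)
      _ ≤ C₁ * (1 + ‖x‖) ^ (-(δ + 1)) * (1 + ‖x‖) := by
          gcongr
          simpa [norm_iteratedFDeriv_one] using hC₁ x
      _ = C₁ * (1 + ‖x‖) ^ (-δ) := by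
          rw [mul_assoc, ← Real.rpow_add_one h_pos.ne']
          ring_nf
  calc ‖V x + fderiv ℝ V x x / 2‖ ≤ ‖V x‖ + ‖fderiv ℝ V x x‖ / 2 := by
        simpa using norm_add_le (V x) (fderiv ℝ V x x / 2)
    _ ≤ (C₀ + C₁ / 2) * (1 + ‖x‖) ^ (-δ) := by linarith

end Euclidean

/-- Euclidean instance of Theorem 5.2 / 5.10: superexponential decay of
positive-energy `L²` eigenfunctions of `-Δ + V`, `V` of symbolic decay order `-δ`. -/
theorem stmt_10 (n : ℕ) (hn : 1 ≤ n) (δ : ℝ) (hδ : 0 < δ)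
    (V : EuclideanSpace ℝ (Fin n) → ℝ) (hV : ContDiff ℝ (⊤ : ℕ∞) V)
    (hdecay : ∀ k : ℕ, ∃ C : ℝ, ∀ x,
      ‖iteratedFDeriv ℝ k V x‖ ≤ C * (1 + ‖x‖) ^ (-(δ + (k:ℝ))))
    (lam : ℝ) (hlam : 0 < lam)
    (ψ : EuclideanSpace ℝ (Fin n) → ℂ) (hψ : ContDiff ℝ (⊤ : ℕ∞) ψ)
    (hL2 : Integrable (fun x => ‖ψ x‖^2))
    (heq : ∀ x, -lap ψ x + (V x : ℂ) * ψ x = (lam : ℂ) * ψ x) :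
    ∀ α : ℝ, Integrable (fun x => Real.exp (2*α*‖x‖) * ‖ψ x‖^2) :=
  have hψ2 : ContDiff ℝ 2 ψ := contDiff_infty.mp hψ 2
  stmt_10_general (contDiff_infty.mp hV 1)
    (tendsto_add_half_fderiv_of_norm_iteratedFDeriv_le hδ hdecay) hlam hψ2 hL2
    fun x => by simpa only [lap_eq_laplacian hψ2, ← Complex.real_smul] using heq x
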